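/- arXiv:1506.03364 — 2 statements merged into one kernel-verified Lean document; each statement's English description precedes it below -/
import Mathlib

section
/- Let κ be an uncountable cardinal with κ = κ^{<κ} and let T ⊆ κ^{<κ} be a subtree. The following are equivalent: (1) [T] contains a closed-in-κ^κ subset homeomorphic to κ^2; (2) there is a continuous injection i : κ^2 → κ^κ with range contained in [T]; (3) there is an inclusion-preserving continuous injection ι : 2^{<κ} → T; (4) T contains a perfect subtree. -/
open Cardinal Set Topology

universe u

/-- The bounded topology on `K → Y`: basic open sets are determined by an
initial segment of values. -/
def bTop (K : Type u) [LinearOrder K] (Y : Type u) : TopologicalSpace (K → Y) :=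
  TopologicalSpace.generateFrom
    {U | ∃ (b : K) (s : K → Y), U = {x | ∀ i, i < b → x i = s i}}

/-- `A` is κ-compact: every open cover (for the bounded topology) has a
subcover of size `< #K`. -/
def KCompact (K : Type u) [LinearOrder K] {Y : Type u} (A : Set (K → Y)) : Prop :=
  ∀ 𝒰 : Set (Set (K → Y)), (∀ U ∈ 𝒰, IsOpen[bTop K Y] U) → A ⊆ ⋃₀ 𝒰 →
    ∃ 𝒱 ⊆ 𝒰, #𝒱 < #K ∧ A ⊆ ⋃₀ 𝒱

/-- `B` is a `K_κ` subset: a union of κ-many κ-compact sets. -/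
def IsKK (K : Type u) [LinearOrder K] (B : Set (K → K)) : Prop :=
  ∃ C : K → Set (K → K), (∀ b, KCompact K (C b)) ∧ B = ⋃ b, C b

/-- Nodes of the tree `Y^{<K}`: sequences of length `b`, for `b : K`. -/
abbrev Nd (K : Type u) [LinearOrder K] (Y : Type u) := Σ b : K, (Set.Iio b → Y)

/-- Restriction of a node to a smaller length. -/
def ndRes (K : Type u) [LinearOrder K] {Y : Type u} (p : Nd K Y) (c : K) (h : c ≤ p.1) :
    Nd K Y :=
  ⟨c, fun i => p.2 ⟨i.1, lt_of_lt_of_le i.2 h⟩⟩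

/-- Restriction of a branch `x : K → Y` to length `b`. -/
def xRes (K : Type u) [LinearOrder K] {Y : Type u} (x : K → Y) (b : K) : Nd K Y :=
  ⟨b, fun i => x i.1⟩

/-- `q` extends `p` as a sequence. -/
def NdExt (K : Type u) [LinearOrder K] {Y : Type u} (q p : Nd K Y) : Prop :=
  ∃ h : p.1 ≤ q.1, ∀ i : Set.Iio p.1, q.2 ⟨i.1, lt_of_lt_of_le i.2 h⟩ = p.2 i

/-- A subtree of `Y^{<K}`: a set of nodes closed under restriction. -/
def IsSubtree (K : Type u) [LinearOrder K] {Y : Type u} (T : Set (Nd K Y)) : Prop :=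
  ∀ p ∈ T, ∀ c, ∀ h : c ≤ p.1, ndRes K p c h ∈ T

/-- The body `[T]`: the set of `K`-branches through `T`. -/
def body (K : Type u) [LinearOrder K] {Y : Type u} (T : Set (Nd K Y)) : Set (K → Y) :=
  {x | ∀ b : K, xRes K x b ∈ T}

/-- `T` is pruned: every node is extended by a branch. -/
def Pruned (K : Type u) [LinearOrder K] {Y : Type u} (T : Set (Nd K Y)) : Prop :=
  ∀ p ∈ T, ∃ x ∈ body K T, NdExt K (xRes K x p.1) p

/-- `b` is a limit element: not least, and with no immediate predecessor. -/
def IsLimElt (K : Type u) [LinearOrder K] (b : K) : Prop :=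
  (∃ c, c < b) ∧ ∀ c, c < b → ∃ d, c < d ∧ d < b

/-- Superclosed: closed under unions of increasing sequences of length `< K`. -/
def Superclosed (K : Type u) [LinearOrder K] {Y : Type u} (T : Set (Nd K Y)) : Prop :=
  ∀ p : Nd K Y, IsLimElt K p.1 → (∀ c, ∀ h : c < p.1, ndRes K p c h.le ∈ T) → p ∈ T

/-- The values at position `p.1` realized by extensions of `p` in `T`, i.e. the
immediate successors of `p` in `T`. -/
def splitVals (K : Type u) [LinearOrder K] {Y : Type u} (T : Set (Nd K Y)) (p : Nd K Y) :
    Set Y :=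
  {a | ∃ q ∈ T, ∃ h : p.1 < q.1,
    (∀ i : Set.Iio p.1, q.2 ⟨i.1, i.2.trans h⟩ = p.2 i) ∧ q.2 ⟨p.1, h⟩ = a}

/-- A perfect tree: a nonempty superclosed subtree in which every node is
extended by a 2-splitting node. -/
def PerfectTree (K : Type u) [LinearOrder K] (T : Set (Nd K K)) : Prop :=
  T.Nonempty ∧ IsSubtree K T ∧ Superclosed K T ∧
    ∀ p ∈ T, ∃ q ∈ T, NdExt K q p ∧
      ∃ a ∈ splitVals K T q, ∃ a' ∈ splitVals K T q, a ≠ a'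

/-- A κ-Miller tree: a nonempty superclosed subtree in which every node is
extended by a κ-splitting node. -/
def MillerTree (K : Type u) [LinearOrder K] (T : Set (Nd K K)) : Prop :=
  T.Nonempty ∧ IsSubtree K T ∧ Superclosed K T ∧
    ∀ p ∈ T, ∃ q ∈ T, NdExt K q p ∧ #K ≤ #(splitVals K T q)

/-- A κ-tree: a subtree of height `K` all of whose levels have size `< #K`. -/
def KTree (K : Type u) [LinearOrder K] {Y : Type u} (T : Set (Nd K Y)) : Prop :=
  (∀ b : K, ∃ t : Set.Iio b → Y, (⟨b, t⟩ : Nd K Y) ∈ T) ∧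
    ∀ b : K, #{t : Set.Iio b → Y | (⟨b, t⟩ : Nd K Y) ∈ T} < #K

/-- A κ-Aronszajn tree: a κ-tree with no branch. -/
def Aronszajn (K : Type u) [LinearOrder K] (S : Set (Nd K K)) : Prop :=
  IsSubtree K S ∧ KTree K S ∧ body K S = ∅

/-- The tree property for `K`: every κ-tree has a branch. -/
def TreeProp (K : Type u) [LinearOrder K] : Prop :=
  ∀ T : Set (Nd K K), IsSubtree K T → KTree K T → (body K T).Nonempty

/-- weak compactness: inaccessibility together with the tree property. -/
def WComp (K : Type u) [LinearOrder K] : Prop :=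
  (#K).IsInaccessible ∧ TreeProp K

/-- `C` is homeomorphic to the generalized Baire space `K → K`. -/
def HomeoToBaire (K : Type u) [LinearOrder K] (C : Set (K → K)) : Prop :=
  letI := bTop K K
  Nonempty (↥C ≃ₜ (K → K))

/-- `C` is homeomorphic to the generalized Cantor space `K → ULift.{u} Bool`. -/
def HomeoToCantor (K : Type u) [LinearOrder K] (C : Set (K → K)) : Prop :=
  letI := bTop K K
  letI : TopologicalSpace (K → ULift.{u} Bool) := bTop K (ULift.{u} Bool)
  Nonempty (↥C ≃ₜ (K → ULift.{u} Bool))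

/-- The Hurewicz dichotomy for `A`. -/
def HD (K : Type u) [LinearOrder K] (A : Set (K → K)) : Prop :=
  (∃ B, IsKK K B ∧ A ⊆ B) ∨
    ∃ C ⊆ A, IsClosed[bTop K K] C ∧ HomeoToBaire K C

/-- The Miller-tree Hurewicz dichotomy for `A`. -/
def MillerHD (K : Type u) [LinearOrder K] (A : Set (K → K)) : Prop :=
  (∃ B, IsKK K B ∧ A ⊆ B) ∨ ∃ T, MillerTree K T ∧ body K T ⊆ A

/-- Σ¹₁ subsets of `K → K`: projections of closed subsets of the product. -/
def Sigma11 (K : Type u) [LinearOrder K] (A : Set (K → K)) : Prop :=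
  letI := bTop K K
  ∃ C : Set ((K → K) × (K → K)), IsClosed C ∧ A = Prod.fst '' C

/-- The κ-perfect set property. -/
def PSP (K : Type u) [LinearOrder K] (A : Set (K → K)) : Prop :=
  #A ≤ #K ∨ ∃ C ⊆ A, IsClosed[bTop K K] C ∧ HomeoToCantor K C

/-- `A ⊆ K → K` is bounded. -/
def BddSet (K : Type u) [LinearOrder K] (A : Set (K → K)) : Prop :=
  ∃ x : K → K, ∀ y ∈ A, ∀ i, y i ≤ x i

/-- `A ⊆ K → K` is eventually bounded. -/
def EvBddSet (K : Type u) [LinearOrder K] (A : Set (K → K)) : Prop :=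
  ∃ x : K → K, ∀ y ∈ A, ∃ b : K, ∀ i, b ≤ i → y i ≤ x i

/-- Nodes of the product tree `K^{<K} × K^{<K}` (pairs of equal length). -/
abbrev PNd (K : Type u) [LinearOrder K] := Σ b : K, (Set.Iio b → K) × (Set.Iio b → K)

/-- Subtree of the product tree: closed under simultaneous restriction. -/
def IsPSubtree (K : Type u) [LinearOrder K] (T : Set (PNd K)) : Prop :=
  ∀ p ∈ T, ∀ c, ∀ h : c ≤ p.1,
    (⟨c, fun i => p.2.1 ⟨i.1, lt_of_lt_of_le i.2 h⟩,
        fun i => p.2.2 ⟨i.1, lt_of_lt_of_le i.2 h⟩⟩ : PNd K) ∈ T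

/-- The projection `p[T]` of the set of branches of a product tree to the first
coordinate. -/
def pProj (K : Type u) [LinearOrder K] (T : Set (PNd K)) : Set (K → K) :=
  {x | ∃ y : K → K, ∀ b : K,
    (⟨b, fun i => x i.1, fun i => y i.1⟩ : PNd K) ∈ T}

/-- An `∃^x`-perfect embedding into a product tree `T`. -/
def PerfEmb (K : Type u) [LinearOrder K] (T : Set (PNd K)) (e : Nd K (ULift.{u} Bool) → PNd K) : Prop :=
  (∀ u, e u ∈ T) ∧
  (∀ u u' : Nd K (ULift.{u} Bool), ∀ h : u.1 < u'.1,
     (∀ i : Set.Iio u.1, u'.2 ⟨i.1, i.2.trans h⟩ = u.2 i) →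
     ∃ h' : (e u).1 < (e u').1,
       (∀ i : Set.Iio (e u).1, (e u').2.1 ⟨i.1, i.2.trans h'⟩ = (e u).2.1 i) ∧
       (∀ i : Set.Iio (e u).1, (e u').2.2 ⟨i.1, i.2.trans h'⟩ = (e u).2.2 i)) ∧
  (∀ u u' : Nd K (ULift.{u} Bool), ¬ NdExt K u u' → ¬ NdExt K u' u →
     ¬ NdExt K ⟨(e u).1, (e u).2.1⟩ ⟨(e u').1, (e u').2.1⟩ ∧
     ¬ NdExt K ⟨(e u').1, (e u').2.1⟩ ⟨(e u).1, (e u).2.1⟩) ∧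
  (∀ u : Nd K (ULift.{u} Bool), IsLimElt K u.1 → ∀ d, d < (e u).1 →
     ∃ c, ∃ h : c < u.1, d < (e (ndRes K u c h.le)).1)

/-- The immediate extension `u⌢⟨a⟩` of a node `u` by a value `a`. -/
def extNd (K : Type u) [LinearOrder K] [SuccOrder K] (u : Nd K K) (a : K) : Nd K K :=
  ⟨Order.succ u.1, fun i => if h : i.1 < u.1 then u.2 ⟨i.1, h⟩ else a⟩

/-- An `∃^x`-superperfect embedding into a product tree `T`. -/
def SuperPerfEmb (K : Type u) [LinearOrder K] [SuccOrder K] (T : Set (PNd K))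
    (e : Nd K K → PNd K) : Prop :=
  (∀ u, e u ∈ T) ∧
  (∀ u u' : Nd K K, ∀ h : u.1 < u'.1,
     (∀ i : Set.Iio u.1, u'.2 ⟨i.1, i.2.trans h⟩ = u.2 i) →
     ∃ h' : (e u).1 < (e u').1,
       (∀ i : Set.Iio (e u).1, (e u').2.1 ⟨i.1, i.2.trans h'⟩ = (e u).2.1 i) ∧
       (∀ i : Set.Iio (e u).1, (e u').2.2 ⟨i.1, i.2.trans h'⟩ = (e u).2.2 i)) ∧
  (∀ u : Nd K K, IsLimElt K u.1 → ∀ d, d < (e u).1 →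
     ∃ c, ∃ h : c < u.1, d < (e (ndRes K u c h.le)).1) ∧
  (∀ u : Nd K K, ∃ γ : K, (e u).1 ≤ γ ∧
     ∃ hlen : ∀ a : K, γ < (e (extNd K u a)).1,
       ∀ a b : K, a ≠ b →
         (∀ i : Set.Iio γ,
           (e (extNd K u a)).2.1 ⟨i.1, i.2.trans (hlen a)⟩ =
           (e (extNd K u b)).2.1 ⟨i.1, i.2.trans (hlen b)⟩) ∧
         (e (extNd K u a)).2.1 ⟨γ, hlen a⟩ ≠ (e (extNd K u b)).2.1 ⟨γ, hlen b⟩)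

/-!
All four conditions are equivalent to the existence of a perfect embedding into `T`: a map
`2^{<κ} → T` which is continuous and both preserves and reflects inclusion.

Perfect embeddings are built by fusion, splitting at successors and taking unions at limits, which
is possible because `κ` is regular. In a perfect subtree the splitting is given. For a continuous
injection `φ` of `κ^2` into `[T]` one works with the nodes which determine `φ` below their own
length; as `κ` has uncountable cofinality, closing off under moduli of continuity shows that every
branch has cofinally many of them, and finitely many branches can then be told apart at once.

The branch map of a perfect embedding is a homeomorphism onto its range. This range is closed, and
its initial segments form a superclosed tree, by the same argument: if `z` is approximated by the
range below every `c` in an initial segment `A` of `κ` but agrees on `A` with no member of it, then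
one can trace `z` back through the tree `2^{<κ}`, using the pigeonhole principle at successors and
continuity at limits, to a branch whose image does agree with `z` on `A`.

An inclusion-preserving continuous injection need not reflect inclusion, but its branch map is
still injective: at a closure point `δ` of the lengths involved the image of `x ↾ δ` has length
exactly `δ`, so it is determined by the image of `x`.
-/

theorem isRegular_of_powerlt_self {κ : Cardinal.{u}} (hκ : ℵ₀ ≤ κ) (hpow : κ ^< κ = κ) :
    κ.IsRegular := by
  refine ⟨hκ, ?_⟩
  by_contra! hcof
  exact ((lt_power_cof_ord hκ).trans_le (le_powerlt κ hcof)).ne' hpow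

section Cofinality

variable {K : Type u} [LinearOrder K]

theorem exists_forall_lt_of_mk_lt_cof {A : Set K} (hA : #A < Order.cof K) :
    ∃ l, ∀ a ∈ A, a < l :=
  not_isCofinal_iff.1 fun h => (Order.cof_le h).not_gt hA

theorem noMaxOrder_of_aleph0_lt_cof (hω : ℵ₀ < Order.cof K) : NoMaxOrder K where
  exists_gt b := by
    obtain ⟨l, hl⟩ := exists_forall_lt_of_mk_lt_cof (A := {b})
      (((countable_singleton b).le_aleph0).trans_lt hω)
    exact ⟨l, hl b rfl⟩

theorem isMin_or_exists_covBy_or_isLimElt (b : K) :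
    IsMin b ∨ (∃ c, c ⋖ b) ∨ IsLimElt K b := by
  by_cases hmin : ∃ c, c < b
  · by_cases hcov : ∃ c, c ⋖ b
    · exact .inr (.inl hcov)
    · refine .inr (.inr ⟨hmin, fun c hc => ?_⟩)
      by_contra! h
      exact hcov ⟨c, hc, fun d hcd hdb => (h d hcd).not_gt hdb⟩
  · exact .inl (isMin_iff_forall_not_lt.2 fun c hc => hmin ⟨c, hc⟩)

variable [WellFoundedLT K]

theorem cof_eq_mk_of_isRegular (hseg : ∀ b : K, #(Iio b) < #K) (hreg : (#K).IsRegular) :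
    Order.cof K = #K := by
  have htype : (#K).ord = Ordinal.type (fun a b : K => a < b) := by
    refine (ord_le_type _).eq_of_not_lt fun hlt => ?_
    obtain ⟨b, hb⟩ := Ordinal.typein_surj _ hlt
    have hcard : #(Iio b) = #K := by
      simpa only [← Ordinal.type_Iio_lt, Ordinal.card_type, card_ord]
        using congr_arg Ordinal.card hb
    exact (hseg b).ne hcard
  rw [← Ordinal.cof_type, ← htype, hreg.cof_ord]

theorem exists_gt_limit_closed (hω : ℵ₀ < Order.cof K) (f : K → K) (b : K) :
    ∃ δ, b < δ ∧ ∀ d < δ, ∃ c, d < c ∧ c < δ ∧ f c < δ := by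
  have : NoMaxOrder K := noMaxOrder_of_aleph0_lt_cof hω
  choose g hg using fun a : K => exists_gt (max a (f a))
  let a : ℕ → K := fun n => g^[n] b
  have ha (n : ℕ) : a n < a (n + 1) ∧ f (a n) < a (n + 1) := by
    simpa only [a, Function.iterate_succ_apply', max_lt_iff] using hg (a n)
  obtain ⟨δ, hδ, hmin⟩ := WellFounded.has_min (wellFounded_lt (α := K)) {l | ∀ n, a n < l} (by
    obtain ⟨l, hl⟩ := exists_forall_lt_of_mk_lt_cof (A := range a)
      ((countable_range a).le_aleph0.trans_lt hω)
    exact ⟨l, fun n => hl _ ⟨n, rfl⟩⟩)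
  refine ⟨δ, hδ 0, fun d hd => ?_⟩
  obtain ⟨n, hn⟩ : ∃ n, d ≤ a n := by
    by_contra! h
    exact hmin d h hd
  exact ⟨a (n + 1), hn.trans_lt (ha n).1, hδ _, (ha (n + 1)).2.trans (hδ _)⟩

theorem exists_first_ne {Y : Type u} {x y : K → Y} (h : x ≠ y) :
    ∃ a, EqOn x y (Iio a) ∧ x a ≠ y a := by
  obtain ⟨a, ha, hmin⟩ :=
    WellFounded.has_min (wellFounded_lt (α := K)) {i | x i ≠ y i} (Function.ne_iff.1 h)
  exact ⟨a, fun i hi => not_not.1 fun hne => hmin i hne hi, ha⟩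

end Cofinality

section Nodes

variable {K : Type u} [LinearOrder K] {Y : Type u}

theorem xRes_eq_xRes_iff {x y : K → Y} {b : K} :
    xRes K x b = xRes K y b ↔ EqOn x y (Iio b) := by
  refine ⟨fun h i hi => congr_fun (eq_of_heq (Sigma.mk.inj h).2) ⟨i, hi⟩, fun h => ?_⟩
  exact congr_arg (Sigma.mk b) (funext fun i => h i.2)

theorem exists_xRes_eq [Nonempty Y] (p : Nd K Y) : ∃ x, xRes K x p.1 = p := by
  classical
  obtain ⟨y⟩ := ‹Nonempty Y›
  refine ⟨fun i => if h : i < p.1 then p.2 ⟨i, h⟩ else y, ?_⟩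
  exact Sigma.ext rfl (heq_of_eq (funext fun i => dif_pos i.2))

theorem ndExt_ndRes (p : Nd K Y) (c : K) (h : c ≤ p.1) : NdExt K p (ndRes K p c h) :=
  ⟨h, fun _ => rfl⟩

theorem ndExt_xRes (x : K → Y) {b c : K} (h : c ≤ b) : NdExt K (xRes K x b) (xRes K x c) :=
  ⟨h, fun _ => rfl⟩

instance : Std.Refl (NdExt K (Y := Y)) := ⟨fun _ => ⟨le_rfl, fun _ => rfl⟩⟩

theorem NdExt.trans {p q r : Nd K Y} (hrq : NdExt K r q) (hqp : NdExt K q p) : NdExt K r p :=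
  ⟨hqp.1.trans hrq.1, fun i => (hrq.2 ⟨i, i.2.trans_le hqp.1⟩).trans (hqp.2 i)⟩

theorem NdExt.of_le {p q r : Nd K Y} (hp : NdExt K r p) (hq : NdExt K r q) (h : p.1 ≤ q.1) :
    NdExt K q p :=
  ⟨h, fun i => (hq.2 ⟨i, i.2.trans_le h⟩).symm.trans (hp.2 i)⟩

theorem NdExt.total {p q r : Nd K Y} (hp : NdExt K r p) (hq : NdExt K r q) :
    NdExt K p q ∨ NdExt K q p :=
  (le_total q.1 p.1).imp (hq.of_le hp) (hp.of_le hq)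

theorem NdExt.ndRes_eq {p q : Nd K Y} (h : NdExt K q p) : ndRes K q p.1 h.1 = p :=
  Sigma.ext rfl (heq_of_eq (funext h.2))

theorem NdExt.eq_of_le {p q : Nd K Y} (h : NdExt K q p) (hle : q.1 ≤ p.1) : q = p := by
  obtain ⟨b, s⟩ := p
  obtain ⟨c, t⟩ := q
  obtain rfl : b = c := h.1.antisymm hle
  exact h.ndRes_eq

theorem xRes_eq_of_ndExt {x : K → Y} {p q : Nd K Y} (hx : xRes K x q.1 = q) (h : NdExt K q p) :
    xRes K x p.1 = p := by
  rw [← hx] at h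
  exact h.ndRes_eq

theorem IsSubtree.mem_of_ndExt {T : Set (Nd K Y)} (hT : IsSubtree K T) {p q : Nd K Y} (hq : q ∈ T)
    (h : NdExt K q p) : p ∈ T :=
  h.ndRes_eq ▸ hT q hq p.1 h.1

theorem exists_forall_xRes_eq_of_isChain [Nonempty Y] {C : Set (Nd K Y)}
    (hC : IsChain (NdExt K) C) : ∃ x, ∀ q ∈ C, xRes K x q.1 = q := by
  classical
  obtain ⟨y⟩ := ‹Nonempty Y›
  let x : K → Y := fun i =>
    if h : ∃ q ∈ C, i < q.1 then h.choose.2 ⟨i, h.choose_spec.2⟩ else y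
  refine ⟨x, fun q hq => Sigma.ext rfl (heq_of_eq (funext fun i => ?_))⟩
  have h : ∃ r ∈ C, i.1 < r.1 := ⟨q, hq, i.2⟩
  refine (dif_pos h).trans ?_
  rcases hC.total h.choose_spec.1 hq with hext | hext
  · exact hext.2 i
  · exact (hext.2 ⟨i, h.choose_spec.2⟩).symm

/-- The tree of all initial segments of elements of `A`. -/
def initSegTree (K : Type u) [LinearOrder K] {Y : Type u} (A : Set (K → Y)) : Set (Nd K Y) :=
  {p | ∃ x ∈ A, xRes K x p.1 = p}

theorem isSubtree_initSegTree (A : Set (K → Y)) : IsSubtree K (initSegTree K A) :=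
  fun p ⟨x, hxA, hx⟩ c hc => ⟨x, hxA, xRes_eq_of_ndExt hx (ndExt_ndRes p c hc)⟩

theorem initSegTree_subset {A : Set (K → Y)} {T : Set (Nd K Y)} (hA : A ⊆ body K T) :
    initSegTree K A ⊆ T := by
  rintro p ⟨x, hxA, hx⟩
  exact hx ▸ hA hxA p.1

theorem apply_mem_splitVals_initSegTree [NoMaxOrder K] {A : Set (K → Y)} {x : K → Y} (hx : x ∈ A)
    (a : K) : x a ∈ splitVals K (initSegTree K A) (xRes K x a) := by
  obtain ⟨b, hab⟩ := exists_gt a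
  exact ⟨xRes K x b, ⟨x, hx, rfl⟩, hab, fun _ => rfl, rfl⟩

theorem perfectTree_initSegTree_of_superclosed [WellFoundedLT K] [NoMaxOrder K] [Nonempty K]
    {A : Set (K → K)} (hA : A.Nonempty) (hsup : Superclosed K (initSegTree K A))
    (hdense : ∀ x ∈ A, ∀ b, ∃ y ∈ A, EqOn x y (Iio b) ∧ x ≠ y) :
    PerfectTree K (initSegTree K A) := by
  refine ⟨?_, isSubtree_initSegTree A, hsup, ?_⟩
  · obtain ⟨x, hx⟩ := hA
    obtain ⟨b⟩ := ‹Nonempty K›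
    exact ⟨xRes K x b, x, hx, rfl⟩
  · rintro p ⟨x, hx, hxp⟩
    obtain ⟨y, hy, hxy, hne⟩ := hdense x hx p.1
    obtain ⟨a, ha, hane⟩ := exists_first_ne hne
    have hpa : p.1 ≤ a := not_lt.1 fun h => hane (hxy h)
    refine ⟨xRes K x a, ⟨x, hx, rfl⟩, hxp ▸ ndExt_xRes x hpa, x a,
      apply_mem_splitVals_initSegTree hx a, y a, ?_, hane⟩
    rw [xRes_eq_xRes_iff.2 ha]
    exact apply_mem_splitVals_initSegTree hy a

end Nodes

section BoundedTopology

variable {K : Type u} [LinearOrder K] [Nonempty K] {Y Z : Type u}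

theorem hasBasis_nhds_bTop (x : K → Y) :
    (@nhds _ (bTop K Y) x).HasBasis (fun _ => True) fun b : K => {y | EqOn y x (Iio b)} := by
  have hnhds : @nhds _ (bTop K Y) x = ⨅ b : K, Filter.principal {y | EqOn y x (Iio b)} := by
    refine TopologicalSpace.nhds_generateFrom.trans (le_antisymm ?_ ?_)
    · exact le_iInf fun b => iInf₂_le _ ⟨fun _ _ => rfl, b, x, rfl⟩
    · refine le_iInf₂ fun U hU => ?_
      obtain ⟨hxU, b, s, rfl⟩ := hU
      exact iInf_le_of_le b (Filter.principal_mono.2 fun y hy i hi => (hy hi).trans (hxU i hi))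
  rw [hnhds]
  refine Filter.hasBasis_iInf_principal fun b c => ⟨max b c, ?_, ?_⟩
  · exact fun y hy => hy.mono (Iio_subset_Iio (le_max_left b c))
  · exact fun y hy => hy.mono (Iio_subset_Iio (le_max_right b c))

theorem continuous_bTop_iff {f : (K → Y) → (K → Z)} :
    Continuous[bTop K Y, bTop K Z] f ↔
      ∀ x b, ∃ c, ∀ y, EqOn y x (Iio c) → EqOn (f y) (f x) (Iio b) := by
  let _ := bTop K Y
  let _ := bTop K Z
  simp only [continuous_iff_continuousAt, ContinuousAt,
    (hasBasis_nhds_bTop _).tendsto_iff (hasBasis_nhds_bTop _), true_and, forall_const,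
    mem_ofPred_eq]

theorem isInducing_bTop {f : (K → Y) → (K → Z)} (hf : Continuous[bTop K Y, bTop K Z] f)
    (hinv : ∀ x b, ∃ c, ∀ y, EqOn (f y) (f x) (Iio c) → EqOn y x (Iio b)) :
    @IsInducing _ _ (bTop K Y) (bTop K Z) f := by
  let _ := bTop K Y
  let _ := bTop K Z
  refine isInducing_iff_nhds.2 fun x => (hf.tendsto x).le_comap.antisymm ?_
  refine (((hasBasis_nhds_bTop (f x)).comap f).le_basis_iff (hasBasis_nhds_bTop x)).2 fun b _ => ?_
  obtain ⟨c, hc⟩ := hinv x b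
  exact ⟨c, trivial, hc⟩

theorem isClosed_bTop_iff {A : Set (K → Y)} :
    IsClosed[bTop K Y] A ↔ ∀ x, (∀ b, ∃ y ∈ A, EqOn y x (Iio b)) → x ∈ A := by
  let _ := bTop K Y
  simp only [← closure_subset_iff_isClosed, subset_def,
    mem_closure_iff_nhds_basis (hasBasis_nhds_bTop _), forall_const, mem_ofPred_eq]

end BoundedTopology

section BranchMap

variable {K : Type u} [LinearOrder K] {B Y : Type u} [Nonempty Y]

/-- The map on branches induced by an inclusion-preserving map `ι` of nodes: `branchMap ι x` is the
union of the nodes `ι (x ↾ b)`. The choice operator is only meaningful when these nodes form a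
chain, see `xRes_branchMap`. -/
noncomputable def branchMap (ι : Nd K B → Nd K Y) (x : K → B) : K → Y :=
  Classical.epsilon fun y => ∀ b, xRes K y (ι (xRes K x b)).1 = ι (xRes K x b)

variable {ι : Nd K B → Nd K Y} (hmono : ∀ u u', NdExt K u' u → NdExt K (ι u') (ι u))
include hmono

theorem xRes_branchMap (x : K → B) (b : K) :
    xRes K (branchMap ι x) (ι (xRes K x b)).1 = ι (xRes K x b) := by
  have hchain : IsChain (NdExt K) (range fun b => ι (xRes K x b)) := by
    rintro _ ⟨b, rfl⟩ _ ⟨c, rfl⟩ -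
    exact (le_total c b).imp (fun h => hmono _ _ (ndExt_xRes x h)) fun h =>
      hmono _ _ (ndExt_xRes x h)
  obtain ⟨y, hy⟩ := exists_forall_xRes_eq_of_isChain hchain
  exact Classical.epsilon_spec (p := fun y => ∀ b, xRes K y (ι (xRes K x b)).1 = ι (xRes K x b))
    ⟨y, fun b => hy _ ⟨b, rfl⟩⟩ b

variable [WellFoundedLT K] (hinj : Function.Injective ι)
include hinj

omit [Nonempty Y] in
theorem le_length_of_injective (x : K → B) (b : K) : b ≤ (ι (xRes K x b)).1 := by
  have hstrict : StrictMono fun b => (ι (xRes K x b)).1 := fun b c hbc => by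
    have hext := hmono _ _ (ndExt_xRes x hbc.le)
    refine hext.1.lt_of_not_ge fun hle => hbc.ne ?_
    exact congr_arg Sigma.fst (hinj (hext.eq_of_le hle)).symm
  exact hstrict.le_apply

theorem branchMap_eqOn {x y : K → B} {b : K} (h : EqOn x y (Iio b)) :
    EqOn (branchMap ι x) (branchMap ι y) (Iio b) := by
  have hy := xRes_branchMap hmono y b
  rw [← xRes_eq_xRes_iff.2 h, ← xRes_branchMap hmono x b] at hy
  exact (xRes_eq_xRes_iff.1 hy).symm.mono (Iio_subset_Iio (le_length_of_injective hmono hinj x b))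

theorem continuous_branchMap [Nonempty K] : Continuous[bTop K B, bTop K Y] (branchMap ι) :=
  continuous_bTop_iff.2 fun _ b => ⟨b, fun _ hy => branchMap_eqOn hmono hinj hy⟩

theorem range_branchMap_subset_body {T : Set (Nd K Y)} (hT : IsSubtree K T)
    (hι : ∀ u, ι u ∈ T) : range (branchMap ι) ⊆ body K T := by
  rintro _ ⟨x, rfl⟩ b
  have hext := ndExt_xRes (branchMap ι x) (le_length_of_injective hmono hinj x b)
  rw [xRes_branchMap hmono] at hext
  exact hT.mem_of_ndExt (hι _) hext

end BranchMap

section PerfectEmbedding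

variable {K : Type u} [LinearOrder K] {B Y : Type u}

/-- Continuity of an inclusion-preserving map of nodes: at a node `u` of limit length, `ι u` is the
union of the nodes `ι (u ↾ c)`. Given inclusion, this is a statement about lengths only. -/
def NodeContinuous (ι : Nd K B → Nd K Y) : Prop :=
  ∀ u, IsLimElt K u.1 → ∀ d, d < (ι u).1 → ∃ c, ∃ h : c < u.1, d < (ι (ndRes K u c h.le)).1

/-- A continuous map of trees which preserves and reflects inclusion: the common node-level form of
a closed copy of a generalized Cantor space and of a perfect subtree. -/
structure IsPerfectEmbedding (ι : Nd K B → Nd K Y) : Prop where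
  ndExt_iff : ∀ u u', NdExt K (ι u') (ι u) ↔ NdExt K u' u
  continuous : NodeContinuous ι

namespace IsPerfectEmbedding

variable {ι : Nd K B → Nd K Y} (hι : IsPerfectEmbedding ι)
include hι

theorem monotone (u u' : Nd K B) : NdExt K u' u → NdExt K (ι u') (ι u) :=
  (hι.ndExt_iff u u').2

theorem injective : Function.Injective ι := fun u u' h => by
  have hu : NdExt K u' u := (hι.ndExt_iff u u').1 (h ▸ refl _)
  have hu' : NdExt K u u' := (hι.ndExt_iff u' u).1 (h ▸ refl _)
  exact hu'.eq_of_le hu.1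

variable [Nonempty Y]

theorem xRes_branchMap_eq_iff {x : K → B} {u : Nd K B} :
    xRes K (branchMap ι x) (ι u).1 = ι u ↔ xRes K x u.1 = u := by
  refine ⟨fun h => ?_, fun h => h ▸ xRes_branchMap hι.monotone x u.1⟩
  have hx := xRes_branchMap hι.monotone x u.1
  rcases le_total (ι u).1 (ι (xRes K x u.1)).1 with hle | hle
  · have hext := ndExt_xRes (branchMap ι x) hle
    rw [h, hx, hι.ndExt_iff] at hext
    exact hext.eq_of_le le_rfl
  · have hext := ndExt_xRes (branchMap ι x) hle
    rw [h, hx, hι.ndExt_iff] at hext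
    exact (hext.eq_of_le le_rfl).symm

theorem eqOn_of_branchMap_eqOn {x y : K → B} {b : K}
    (h : EqOn (branchMap ι y) (branchMap ι x) (Iio (ι (xRes K x b)).1)) : EqOn y x (Iio b) := by
  rw [← xRes_eq_xRes_iff, xRes_branchMap hι.monotone x b, hι.xRes_branchMap_eq_iff] at h
  exact xRes_eq_xRes_iff.1 h

theorem injective_branchMap [NoMaxOrder K] : Function.Injective (branchMap ι) := fun x y h => by
  funext i
  obtain ⟨b, hb⟩ := exists_gt i
  exact hι.eqOn_of_branchMap_eqOn (b := b) (fun _ _ => congr_fun h _) hb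

theorem branchMap_eqOn_of_xRes_eq {u : Nd K B} {x y : K → B} (hx : xRes K x u.1 = u)
    (hy : xRes K y u.1 = u) : EqOn (branchMap ι x) (branchMap ι y) (Iio (ι u).1) :=
  xRes_eq_xRes_iff.1
    ((hι.xRes_branchMap_eq_iff.2 hx).trans (hι.xRes_branchMap_eq_iff.2 hy).symm)

end IsPerfectEmbedding

/-- The node `ι u` is an initial segment of `z` with length in `A`. -/
def FollowsBranch (ι : Nd K B → Nd K Y) (A : Set K) (z : K → Y) (u : Nd K B) : Prop :=
  (ι u).1 ∈ A ∧ xRes K z (ι u).1 = ι u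

namespace IsPerfectEmbedding

variable {ι : Nd K B → Nd K Y} (hι : IsPerfectEmbedding ι) {A : Set K} {z : K → Y}
include hι

theorem isChain_setOf_followsBranch : IsChain (NdExt K) {u | FollowsBranch ι A z u} := by
  rintro u ⟨-, hu⟩ v ⟨-, hv⟩ -
  rw [← hι.ndExt_iff, ← hι.ndExt_iff, ← hu, ← hv]
  exact (le_total _ _).imp (ndExt_xRes z) (ndExt_xRes z)

variable [Nonempty Y]

theorem exists_eqOn_of_followsBranch
    (hz : ∀ c ∈ A, ∃ y, EqOn (branchMap ι y) z (Iic c)) {u : Nd K B} (hu : FollowsBranch ι A z u)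
    {c : K} (hc : c ∈ A) : ∃ y, xRes K y u.1 = u ∧ EqOn (branchMap ι y) z (Iic c) := by
  obtain ⟨d, hd, hcd, hud⟩ : ∃ d ∈ A, c ≤ d ∧ (ι u).1 ≤ d :=
    ⟨max c (ι u).1, max_rec' (· ∈ A) hc hu.1, le_max_left _ _, le_max_right _ _⟩
  obtain ⟨y, hy⟩ := hz d hd
  refine ⟨y, hι.xRes_branchMap_eq_iff.1 ?_, hy.mono (Iic_subset_Iic.2 hcd)⟩
  exact (xRes_eq_xRes_iff.2 (hy.mono fun i hi => hi.le.trans hud)).trans hu.2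

theorem followsBranch_of_exists_eqOn [Nonempty B] (hA : IsLowerSet A)
    (hno : ∀ x, ¬EqOn (branchMap ι x) z A) {u : Nd K B}
    (hu : ∀ c ∈ A, ∃ y, xRes K y u.1 = u ∧ EqOn (branchMap ι y) z (Iic c)) :
    FollowsBranch ι A z u := by
  obtain hmem | hmem := em ((ι u).1 ∈ A)
  · obtain ⟨y, hyu, hyz⟩ := hu _ hmem
    refine ⟨hmem, ?_⟩
    rw [← hι.xRes_branchMap_eq_iff.2 hyu]
    exact xRes_eq_xRes_iff.2 (hyz.symm.mono Iio_subset_Iic_self)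
  · obtain ⟨x, hx⟩ := exists_xRes_eq u
    refine absurd (fun c hc => ?_) (hno x)
    obtain ⟨y, hyu, hyz⟩ := hu c hc
    have hcu : c < (ι u).1 := not_le.1 fun h => hmem (hA h hc)
    exact (hι.branchMap_eqOn_of_xRes_eq hx hyu hcu).trans (hyz le_rfl)

/-- Pigeonhole over the finitely many immediate successors. -/
theorem exists_followsBranch_of_covBy [Finite B] [Nonempty B] (hA : IsLowerSet A)
    (hno : ∀ x, ¬EqOn (branchMap ι x) z A) (hz : ∀ c ∈ A, ∃ y, EqOn (branchMap ι y) z (Iic c))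
    {x : K → B} {b c : K} (hcb : c ⋖ b) (hc : FollowsBranch ι A z (xRes K x c)) :
    ∃ v, v.1 = b ∧ FollowsBranch ι A z v := by
  classical
  by_contra! hbad
  have hfail (j : B) : ∃ d ∈ A, ∀ y, xRes K y b = xRes K (Function.update x c j) b →
      ¬EqOn (branchMap ι y) z (Iic d) := by
    by_contra! hgood
    exact hbad _ rfl
      (hι.followsBranch_of_exists_eqOn (u := xRes K (Function.update x c j) b) hA hno hgood)
  choose d hdA hd using hfail
  obtain ⟨m, hm⟩ := Finite.exists_max d
  obtain ⟨y, hyx, hyz⟩ := hι.exists_eqOn_of_followsBranch hz hc (hdA m)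
  refine hd (y c) y (xRes_eq_xRes_iff.2 fun i hi => ?_) (hyz.mono (Iic_subset_Iic.2 (hm _)))
  obtain rfl | hic := (hcb.le_of_lt hi).eq_or_lt
  · exact (Function.update_self i (y i) x).symm
  · exact (xRes_eq_xRes_iff.1 hyx hic).trans (Function.update_of_ne hic.ne ..).symm

theorem followsBranch_of_isLimElt (hA : IsLowerSet A) (hno : ∀ x, ¬EqOn (branchMap ι x) z A)
    {x : K → B} {b : K} (hb : IsLimElt K b) (hx : ∀ c < b, FollowsBranch ι A z (xRes K x c)) :
    FollowsBranch ι A z (xRes K x b) := by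
  have hmem : ∀ d < (ι (xRes K x b)).1, d ∈ A ∧ branchMap ι x d = z d := fun d hd => by
    obtain ⟨c, hcb, hdc⟩ := hι.continuous _ hb d hd
    obtain ⟨hcA, hcz⟩ := hx c hcb
    refine ⟨hA hdc.le hcA, ?_⟩
    exact xRes_eq_xRes_iff.1 ((xRes_branchMap hι.monotone x c).trans hcz.symm) hdc
  refine ⟨by_contra fun hnot => hno x fun d hd => ?_, ?_⟩
  · exact (hmem d (not_le.1 fun h => hnot (hA h hd))).2
  · rw [← xRes_branchMap hι.monotone x b]
    exact xRes_eq_xRes_iff.2 fun d hd => (hmem d hd).2.symm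

theorem exists_branchMap_eqOn [WellFoundedLT K] [NoMaxOrder K] [Finite B] [Nonempty B]
    (hA : IsLowerSet A) (hz : ∀ c ∈ A, ∃ y, EqOn (branchMap ι y) z (Iic c)) :
    ∃ x, EqOn (branchMap ι x) z A := by
  by_contra! hno
  obtain ⟨x, hx⟩ :=
    exists_forall_xRes_eq_of_isChain (hι.isChain_setOf_followsBranch (A := A) (z := z))
  have hfollow (b : K) : FollowsBranch ι A z (xRes K x b) := by
    induction b using WellFoundedLT.induction with
    | ind b ih =>
      rcases isMin_or_exists_covBy_or_isLimElt b with hmin | ⟨c, hcb⟩ | hlim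
      · refine hι.followsBranch_of_exists_eqOn hA hno fun c hc => ?_
        obtain ⟨y, hy⟩ := hz c hc
        exact ⟨y, xRes_eq_xRes_iff.2 fun i hi => absurd hi hmin.not_lt, hy⟩
      · obtain ⟨v, rfl, hv⟩ := hι.exists_followsBranch_of_covBy hA hno hz hcb (ih c hcb.lt)
        exact (hx v hv).symm ▸ hv
      · exact hι.followsBranch_of_isLimElt hA hno hlim ih
  refine hno x fun d _ => ?_
  obtain ⟨b, hb⟩ := exists_gt d
  have hdb := hb.trans_le (le_length_of_injective hι.monotone hι.injective x b)
  exact xRes_eq_xRes_iff.1 ((xRes_branchMap hι.monotone x b).trans (hfollow b).2.symm) hdb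

theorem isClosedEmbedding_branchMap [WellFoundedLT K] [NoMaxOrder K] [Nonempty K] [Finite B]
    [Nonempty B] : @IsClosedEmbedding _ _ (bTop K B) (bTop K Y) (branchMap ι) := by
  let _ := bTop K B
  let _ := bTop K Y
  have hcont := continuous_branchMap hι.monotone hι.injective
  have hind : IsInducing (branchMap ι) :=
    isInducing_bTop hcont fun x b => ⟨_, fun _ hy => hι.eqOn_of_branchMap_eqOn hy⟩
  refine ⟨⟨hind, hι.injective_branchMap⟩, isClosed_bTop_iff.2 fun z hz => ?_⟩
  obtain ⟨x, hx⟩ := hι.exists_branchMap_eqOn isLowerSet_univ (z := z) fun c _ => by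
    obtain ⟨d, hd⟩ := exists_gt c
    obtain ⟨_, ⟨y, rfl⟩, hy⟩ := hz d
    exact ⟨y, hy.mono (Iic_subset_Iio.2 hd)⟩
  exact ⟨x, eqOn_univ _ _ |>.1 hx⟩

theorem isClosed_range_branchMap [WellFoundedLT K] [NoMaxOrder K] [Nonempty K] [Finite B]
    [Nonempty B] : IsClosed[bTop K Y] (range (branchMap ι)) := by
  let _ := bTop K B
  let _ := bTop K Y
  exact hι.isClosedEmbedding_branchMap.isClosed_range

theorem superclosed_initSegTree [WellFoundedLT K] [NoMaxOrder K] [Finite B] [Nonempty B] :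
    Superclosed K (initSegTree K (range (branchMap ι))) := by
  intro p hp hres
  obtain ⟨z, hz⟩ := exists_xRes_eq p
  obtain ⟨x, hx⟩ := hι.exists_branchMap_eqOn (isLowerSet_Iio p.1) (z := z) fun c hc => by
    obtain ⟨d, hcd, hd⟩ := hp.2 c hc
    obtain ⟨_, ⟨y, rfl⟩, hy⟩ := hres d hd
    have hzd : xRes K z d = _ := xRes_eq_of_ndExt hz (ndExt_ndRes p d hd.le)
    exact ⟨y, (xRes_eq_xRes_iff.1 (hy.trans hzd.symm)).mono (Iic_subset_Iio.2 hcd)⟩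
  exact ⟨_, ⟨x, rfl⟩, (xRes_eq_xRes_iff.2 hx).trans hz⟩

end IsPerfectEmbedding

theorem IsPerfectEmbedding.perfectTree_initSegTree [WellFoundedLT K] [NoMaxOrder K] [Nonempty K]
    [Finite B] [Nontrivial B] {ι : Nd K B → Nd K K} (hι : IsPerfectEmbedding ι) :
    PerfectTree K (initSegTree K (range (branchMap ι))) := by
  classical
  refine perfectTree_initSegTree_of_superclosed (range_nonempty _) hι.superclosed_initSegTree ?_
  rintro _ ⟨x, rfl⟩ b
  obtain ⟨j, hj⟩ := exists_ne (x b)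
  have hxj : EqOn x (Function.update x b j) (Iio b) := fun i hi =>
    (Function.update_of_ne hi.ne j x).symm
  refine ⟨_, ⟨Function.update x b j, rfl⟩, branchMap_eqOn hι.monotone hι.injective hxj, ?_⟩
  exact hι.injective_branchMap.ne (Function.update_ne_self_iff.2 hj).symm

end PerfectEmbedding

section UncountableCofinality

variable {K : Type u} [LinearOrder K] [WellFoundedLT K] {B Y : Type u}

theorem length_eq_of_limit_closed {ι : Nd K B → Nd K Y}
    (hmono : ∀ u u', NdExt K u' u → NdExt K (ι u') (ι u)) (hinj : Function.Injective ι)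
    (hcont : NodeContinuous ι) {x : K → B} {δ : K} (hδ : IsLimElt K δ)
    (hclosed : ∀ d < δ, ∃ c, d < c ∧ (ι (xRes K x c)).1 < δ) :
    (ι (xRes K x δ)).1 = δ := by
  refine (le_length_of_injective hmono hinj x δ).antisymm' (not_lt.1 fun hlt => ?_)
  obtain ⟨c, hc, hcδ⟩ := hcont _ hδ δ hlt
  obtain ⟨d, hcd, hd⟩ := hclosed c hc
  exact (hcδ.trans_le (hmono _ _ (ndExt_xRes x hcd.le)).1).not_gt hd

/-- The lengths of `ι (x ↾ b)` and `ι (y ↾ b)` agree at closure points, so `ι` need not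
reflect inclusion. -/
theorem injective_branchMap_of_aleph0_lt_cof [Nonempty Y] (hω : ℵ₀ < Order.cof K)
    {ι : Nd K B → Nd K Y} (hmono : ∀ u u', NdExt K u' u → NdExt K (ι u') (ι u))
    (hinj : Function.Injective ι) (hcont : NodeContinuous ι) :
    Function.Injective (branchMap ι) := by
  refine fun x y hxy => funext fun b => ?_
  obtain ⟨δ, hbδ, hδ⟩ := exists_gt_limit_closed hω
    (fun c => max (ι (xRes K x c)).1 (ι (xRes K y c)).1) b
  have hlimδ : IsLimElt K δ := ⟨⟨b, hbδ⟩, fun d hd => (hδ d hd).imp fun c hc => ⟨hc.1, hc.2.1⟩⟩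
  have hx := length_eq_of_limit_closed hmono hinj hcont hlimδ (x := x) fun d hd =>
    (hδ d hd).imp fun c hc => ⟨hc.1, (max_lt_iff.1 hc.2.2).1⟩
  have hy := length_eq_of_limit_closed hmono hinj hcont hlimδ (x := y) fun d hd =>
    (hδ d hd).imp fun c hc => ⟨hc.1, (max_lt_iff.1 hc.2.2).2⟩
  have hι : ι (xRes K x δ) = ι (xRes K y δ) := by
    rw [← xRes_branchMap hmono x, ← xRes_branchMap hmono y, hx, hy, hxy]
  exact xRes_eq_xRes_iff.1 (hinj hι) hbδ

end UncountableCofinality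

section Fusion

variable {K : Type u} [LinearOrder K] {B Y Z : Type u}

/-- `p` is the union of the nodes in `C`. -/
def IsNodeUnion (C : Set (Nd K Z)) (p : Nd K Z) : Prop :=
  (∀ q ∈ C, NdExt K p q) ∧ ∀ d < p.1, ∃ q ∈ C, d < q.1

/-- `P` contains every node of limit length that is a union of members of `P`. Unlike
`Superclosed`, this makes sense for sets of nodes that are not closed under restriction. -/
def LimitClosed (P : Set (Nd K Z)) : Prop :=
  ∀ p, IsLimElt K p.1 → (∀ d < p.1, ∃ q ∈ P, NdExt K p q ∧ d < q.1) → p ∈ P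

theorem IsSubtree.limitClosed {T : Set (Nd K Z)} (hT : IsSubtree K T) (hsup : Superclosed K T) :
    LimitClosed T := fun p hp hq => hsup p hp fun c hc => by
  obtain ⟨q, hqT, hpq, hcq⟩ := hq c hc
  exact hT.mem_of_ndExt hqT ((ndExt_ndRes p c hc.le).of_le hpq hcq.le)

theorem exists_isNodeUnion [WellFoundedLT K] [Nonempty Z] {C : Set (Nd K Z)}
    (hC : IsChain (NdExt K) C) {l : K} (hl : ∀ q ∈ C, q.1 ≤ l) : ∃ p, IsNodeUnion C p := by
  obtain ⟨x, hx⟩ := exists_forall_xRes_eq_of_isChain hC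
  obtain ⟨b, hb, hmin⟩ :=
    WellFounded.has_min (wellFounded_lt (α := K)) {b | ∀ q ∈ C, q.1 ≤ b} ⟨l, hl⟩
  refine ⟨xRes K x b, fun q hq => hx q hq ▸ ndExt_xRes x (hb q hq), fun d hd => ?_⟩
  by_contra! h
  exact hmin d h hd

theorem IsNodeUnion.mem {C P : Set (Nd K Z)} {p : Nd K Z} (hp : IsNodeUnion C p)
    (hP : LimitClosed P) (hCP : C ⊆ P) (hC : C.Nonempty) : p ∈ P := by
  by_cases hmax : ∃ q ∈ C, p.1 ≤ q.1
  · obtain ⟨q, hq, hpq⟩ := hmax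
    exact (hp.1 q hq).eq_of_le hpq ▸ hCP hq
  · push Not at hmax
    obtain ⟨q, hq⟩ := hC
    refine hP p ⟨⟨q.1, hmax q hq⟩, fun d hd => ?_⟩ fun d hd => ?_
    · obtain ⟨r, hr, hdr⟩ := hp.2 d hd
      exact ⟨r.1, hdr, hmax r hr⟩
    · obtain ⟨r, hr, hdr⟩ := hp.2 d hd
      exact ⟨r, hCP hr, hp.1 r hr, hdr⟩

/-- The fusion of a splitting function `s` from the root `p₀`: the image of `u` is the union of
`p₀` and of the nodes `s (fusion (u ↾ c)) (u c)` for `c` below the length of `u`. The choice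
operator is only meaningful when this union exists, see `fusion_mem_and_isNodeUnion`. -/
noncomputable def fusion [WellFoundedLT K] (p₀ : Nd K Z) (s : Nd K Z → B → Nd K Z) (u : Nd K B) :
    Nd K Z :=
  have : Nonempty (Nd K Z) := ⟨p₀⟩
  Classical.epsilon (IsNodeUnion (insert p₀
    (range fun c : Iio u.1 => s (fusion p₀ s (ndRes K u c c.2.le)) (u.2 c))))
termination_by (wellFounded_lt (α := K)).wrap u.1
decreasing_by exact c.2

variable [WellFoundedLT K]

/-- The chain of nodes whose union is `fusion p₀ s u`. -/
def fusionChain (p₀ : Nd K Z) (s : Nd K Z → B → Nd K Z) (u : Nd K B) : Set (Nd K Z) :=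
  insert p₀ (range fun c : Iio u.1 => s (fusion p₀ s (ndRes K u c c.2.le)) (u.2 c))

theorem isNodeUnion_fusion {p₀ : Nd K Z} {s : Nd K Z → B → Nd K Z} {u : Nd K B}
    (h : ∃ p, IsNodeUnion (fusionChain p₀ s u) p) :
    IsNodeUnion (fusionChain p₀ s u) (fusion p₀ s u) := by
  rw [fusion]
  exact Classical.epsilon_spec h

theorem isChain_fusionChain {p₀ : Nd K Z} {s : Nd K Z → B → Nd K Z} {u : Nd K B}
    (hs : ∀ c : Iio u.1, ∀ j, NdExt K (s (fusion p₀ s (ndRes K u c c.2.le)) j)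
      (fusion p₀ s (ndRes K u c c.2.le)))
    (hu : ∀ c : Iio u.1, IsNodeUnion (fusionChain p₀ s (ndRes K u c c.2.le))
      (fusion p₀ s (ndRes K u c c.2.le))) :
    IsChain (NdExt K) (fusionChain p₀ s u) := by
  have hroot (c : Iio u.1) (j : B) : NdExt K (s (fusion p₀ s (ndRes K u c c.2.le)) j) p₀ :=
    (hs c j).trans ((hu c).1 p₀ (mem_insert _ _))
  have hlt (c d : Iio u.1) (hcd : c < d) (j : B) :
      NdExt K (s (fusion p₀ s (ndRes K u d d.2.le)) j)
        (s (fusion p₀ s (ndRes K u c c.2.le)) (u.2 c)) :=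
    (hs d j).trans ((hu d).1 _ (.inr ⟨⟨c, hcd⟩, rfl⟩))
  rintro _ (rfl | ⟨c, rfl⟩) _ (rfl | ⟨d, rfl⟩) hne
  · exact absurd rfl hne
  · exact .inr (hroot d _)
  · exact .inl (hroot c _)
  · rcases lt_trichotomy c d with hcd | rfl | hdc
    · exact .inr (hlt c d hcd _)
    · exact absurd rfl hne
    · exact .inl (hlt d c hdc _)

variable (hcof : ∀ b : K, #(Iio b) < Order.cof K)
include hcof

theorem exists_forall_mem_fusionChain_length_le (p₀ : Nd K Z) (s : Nd K Z → B → Nd K Z)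
    (u : Nd K B) : ∃ l, ∀ q ∈ fusionChain p₀ s u, q.1 ≤ l := by
  obtain ⟨l, hl⟩ := exists_forall_lt_of_mk_lt_cof (A := range fun c : Iio u.1 =>
    (s (fusion p₀ s (ndRes K u c c.2.le)) (u.2 c)).1) (mk_range_le.trans_lt (hcof u.1))
  refine ⟨max p₀.1 l, ?_⟩
  rintro _ (rfl | ⟨c, rfl⟩)
  · exact le_max_left _ _
  · exact (hl _ ⟨c, rfl⟩).le.trans (le_max_right _ _)

theorem fusion_mem_and_isNodeUnion [Nonempty Z] {P : Set (Nd K Z)} (hP : LimitClosed P)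
    {p₀ : Nd K Z} (hp₀ : p₀ ∈ P) {s : Nd K Z → B → Nd K Z} (hsP : ∀ p ∈ P, ∀ j, s p j ∈ P)
    (hs : ∀ p ∈ P, ∀ j, NdExt K (s p j) p) (u : Nd K B) :
    fusion p₀ s u ∈ P ∧ IsNodeUnion (fusionChain p₀ s u) (fusion p₀ s u) := by
  induction hb : u.1 using WellFoundedLT.induction generalizing u with
  | ind b ih =>
    subst hb
    have ihP (c : Iio u.1) := (ih c c.2 (ndRes K u c c.2.le) rfl).1
    have hchain := isChain_fusionChain (fun c => hs _ (ihP c)) fun c =>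
      (ih c c.2 (ndRes K u c c.2.le) rfl).2
    obtain ⟨l, hl⟩ := exists_forall_mem_fusionChain_length_le hcof p₀ s u
    have hunion := isNodeUnion_fusion (exists_isNodeUnion hchain hl)
    refine ⟨hunion.mem hP (insert_subset hp₀ ?_) (insert_nonempty _ _), hunion⟩
    rintro _ ⟨c, rfl⟩
    exact hsP _ (ihP c) _

end Fusion

section FusionEmbedding

variable {K : Type u} [LinearOrder K] [WellFoundedLT K] {B Y Z : Type u}
  {p₀ : Nd K Z} {s : Nd K Z → B → Nd K Z}

theorem ndExt_fusion_split (hunion : ∀ u, IsNodeUnion (fusionChain p₀ s u) (fusion p₀ s u))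
    (u : Nd K B) (c : Iio u.1) :
    NdExt K (fusion p₀ s u) (s (fusion p₀ s (ndRes K u c c.2.le)) (u.2 c)) :=
  (hunion u).1 _ (.inr ⟨c, rfl⟩)

theorem ndExt_fusion (hunion : ∀ u, IsNodeUnion (fusionChain p₀ s u) (fusion p₀ s u))
    (hs : ∀ u j, NdExt K (s (fusion p₀ s u) j) (fusion p₀ s u)) {u u' : Nd K B}
    (h : NdExt K u' u) : NdExt K (fusion p₀ s u') (fusion p₀ s u) := by
  obtain hlt | heq := h.1.lt_or_eq
  · have hsplit := ndExt_fusion_split hunion u' ⟨u.1, hlt⟩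
    rw [h.ndRes_eq] at hsplit
    exact hsplit.trans (hs u _)
  · exact h.eq_of_le heq.ge ▸ refl _

theorem nodeContinuous_fusion (hunion : ∀ u, IsNodeUnion (fusionChain p₀ s u) (fusion p₀ s u)) :
    NodeContinuous (fusion p₀ s) := by
  intro u hu d hd
  obtain ⟨_, rfl | ⟨c, rfl⟩, hdq⟩ := (hunion u).2 d hd
  · obtain ⟨c, hc⟩ := hu.1
    exact ⟨c, hc, hdq.trans_le ((hunion _).1 _ (mem_insert _ _)).1⟩
  · obtain ⟨c', hcc', hc'⟩ := hu.2 c c.2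
    exact ⟨c', hc', hdq.trans_le (ndExt_fusion_split hunion (ndRes K u c' hc'.le) ⟨c, hcc'⟩).1⟩

end FusionEmbedding

section SplittingFusion

variable {K : Type u} [LinearOrder K] [WellFoundedLT K] {B Y Z : Type u}

theorem exists_ndRes_eq_and_ne {u v : Nd K B} (huv : ¬NdExt K u v) (hvu : ¬NdExt K v u) :
    ∃ (c : K) (hu : c < u.1) (hv : c < v.1),
      ndRes K u c hu.le = ndRes K v c hv.le ∧ u.2 ⟨c, hu⟩ ≠ v.2 ⟨c, hv⟩ := by
  have hdiff : ∃ (c : K) (hu : c < u.1) (hv : c < v.1), u.2 ⟨c, hu⟩ ≠ v.2 ⟨c, hv⟩ := by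
    by_contra! h
    rcases le_total u.1 v.1 with hle | hle
    · exact hvu ⟨hle, fun i => (h i i.2 (i.2.trans_le hle)).symm⟩
    · exact huv ⟨hle, fun i => h i (i.2.trans_le hle) i.2⟩
  obtain ⟨c, ⟨hu, hv, hne⟩, hmin⟩ := WellFounded.has_min (wellFounded_lt (α := K)) _ hdiff
  refine ⟨c, hu, hv, Sigma.ext rfl (heq_of_eq (funext fun i => ?_)), hne⟩
  by_contra h
  exact hmin i ⟨i.2.trans hu, i.2.trans hv, h⟩ i.2

theorem exists_isPerfectEmbedding_of_splitting (hcof : ∀ b : K, #(Iio b) < Order.cof K)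
    [Nontrivial B] [Nonempty Z] {P : Set (Nd K Z)} (hne : P.Nonempty) (hP : LimitClosed P)
    {π : Nd K Z → Nd K Y} (hlen : ∀ p, (π p).1 = p.1)
    (hπ : ∀ p ∈ P, ∀ q ∈ P, NdExt K q p → NdExt K (π q) (π p))
    (hsplit : ∀ p ∈ P, ∃ s : B → Nd K Z, (∀ j, s j ∈ P ∧ NdExt K (s j) p) ∧
      ∀ j k, NdExt K (π (s j)) (π (s k)) → j = k) :
    ∃ e : Nd K B → Nd K Z, (∀ u, e u ∈ P) ∧ IsPerfectEmbedding (π ∘ e) := by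
  obtain ⟨p₀, hp₀⟩ := hne
  choose! s hsP hsπ using hsplit
  have hfusion := fusion_mem_and_isNodeUnion (B := B) hcof hP hp₀ (fun p hp j => (hsP p hp j).1)
    fun p hp j => (hsP p hp j).2
  let e : Nd K B → Nd K Z := fusion p₀ s
  have heP (u : Nd K B) : e u ∈ P := (hfusion u).1
  have hunion (u : Nd K B) := (hfusion u).2
  have hmono {u u' : Nd K B} (h : NdExt K u' u) : NdExt K (e u') (e u) :=
    ndExt_fusion hunion (fun u j => (hsP _ (heP u) j).2) h
  have hbranch (u : Nd K B) (c : Iio u.1) :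
      NdExt K (π (e u)) (π (s (e (ndRes K u c c.2.le)) (u.2 c))) :=
    hπ _ (hsP _ (heP _) _).1 _ (heP u) (ndExt_fusion_split hunion u c)
  have hstep (u : Nd K B) (j : B) : NdExt K (π (s (e u) j)) (π (e u)) :=
    hπ _ (heP u) _ (hsP _ (heP u) j).1 (hsP _ (heP u) j).2
  have hcompat {u : Nd K B} {j k : B} {p : Nd K Y} (hj : NdExt K p (π (s (e u) j)))
      (hk : NdExt K p (π (s (e u) k))) : j = k :=
    (hj.total hk).elim (hsπ _ (heP u) j k) fun h => (hsπ _ (heP u) k j h).symm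
  refine ⟨e, heP, fun u u' => ⟨fun h => ?_, fun h => hπ _ (heP u) _ (heP u') (hmono h)⟩, ?_⟩
  · by_contra hu
    by_cases hu' : NdExt K u u'
    · have hlt : u'.1 < u.1 := lt_of_not_ge fun hle => hu (hu'.eq_of_le hle ▸ refl _)
      have hext := h.trans (hbranch u ⟨u'.1, hlt⟩)
      rw [hu'.ndRes_eq] at hext
      obtain ⟨k, hk⟩ := exists_ne (u.2 ⟨u'.1, hlt⟩)
      exact hk (hsπ _ (heP u') _ _ ((hstep u' k).trans hext))
    · obtain ⟨c, hc, hc', hres, hvals⟩ := exists_ndRes_eq_and_ne hu' hu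
      have hext := h.trans (hbranch u ⟨c, hc⟩)
      simp only [hres] at hext
      exact hvals (hcompat hext (hbranch u' ⟨c, hc'⟩))
  · intro u hu d hd
    obtain ⟨c, hc, hdc⟩ := nodeContinuous_fusion hunion u hu d (hlen (e u) ▸ hd)
    exact ⟨c, hc, (hlen _).symm ▸ hdc⟩

end SplittingFusion

section ContinuousInjection

variable {K : Type u} [LinearOrder K] {B Y : Type u}

/-- The nodes `p` that determine the values of `φ` below their own length. -/
def selfDetermining (φ : (K → B) → (K → Y)) : Set (Nd K B) :=
  {p | ∀ x y, xRes K x p.1 = p → xRes K y p.1 = p → EqOn (φ x) (φ y) (Iio p.1)}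

theorem limitClosed_selfDetermining (φ : (K → B) → (K → Y)) : LimitClosed (selfDetermining φ) := by
  intro p _ hp x y hx hy d hd
  obtain ⟨q, hq, hpq, hdq⟩ := hp d hd
  exact hq x y (xRes_eq_of_ndExt hx hpq) (xRes_eq_of_ndExt hy hpq) hdq

/-- The initial segment of `φ x` of the length of `p`, where `x` is any branch through `p`. -/
noncomputable def nodeMap [Nonempty B] (φ : (K → B) → (K → Y)) (p : Nd K B) : Nd K Y :=
  xRes K (φ (exists_xRes_eq p).choose) p.1

theorem nodeMap_eq [Nonempty B] {φ : (K → B) → (K → Y)} {x : K → B} {p : Nd K B}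
    (hp : p ∈ selfDetermining φ) (hx : xRes K x p.1 = p) : nodeMap φ p = xRes K (φ x) p.1 :=
  xRes_eq_xRes_iff.2 (hp _ x (exists_xRes_eq p).choose_spec hx)

theorem ndExt_nodeMap [Nonempty B] {φ : (K → B) → (K → Y)} {p q : Nd K B}
    (hp : p ∈ selfDetermining φ) (hqp : NdExt K q p) : NdExt K (nodeMap φ q) (nodeMap φ p) := by
  rw [nodeMap_eq hp (xRes_eq_of_ndExt (exists_xRes_eq q).choose_spec hqp)]
  exact ndExt_xRes _ hqp.1

variable [WellFoundedLT K] [Nonempty K] (hω : ℵ₀ < Order.cof K) {φ : (K → B) → (K → Y)}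
  (hφ : Continuous[bTop K B, bTop K Y] φ)
include hω hφ

theorem exists_gt_xRes_mem_selfDetermining (x : K → B) (b : K) :
    ∃ δ, b < δ ∧ xRes K x δ ∈ selfDetermining φ := by
  choose modulus hmodulus using continuous_bTop_iff.1 hφ x
  obtain ⟨δ, hbδ, hδ⟩ := exists_gt_limit_closed hω modulus b
  have hagree {y : K → B} (hy : xRes K y δ = xRes K x δ) : EqOn (φ y) (φ x) (Iio δ) := by
    intro d hd
    obtain ⟨c, hdc, -, hc⟩ := hδ d hd
    exact hmodulus c y ((xRes_eq_xRes_iff.1 hy).mono (Iio_subset_Iio hc.le)) hdc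
  exact ⟨δ, hbδ, fun y z hy hz => (hagree hy).trans (hagree hz).symm⟩

theorem exists_splitting_selfDetermining [Finite B] [Nonempty B] (hinj : Function.Injective φ)
    (p : Nd K B) :
    ∃ s : B → Nd K B, (∀ j, s j ∈ selfDetermining φ ∧ NdExt K (s j) p) ∧
      ∀ j k, NdExt K (nodeMap φ (s j)) (nodeMap φ (s k)) → j = k := by
  classical
  obtain ⟨x, hx⟩ := exists_xRes_eq p
  let y : B → K → B := Function.update x p.1
  have hy (j : B) : xRes K (y j) p.1 = p :=
    (xRes_eq_xRes_iff.2 fun i hi => Function.update_of_ne hi.ne j x).trans hx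
  have hdiff (j k : B) : ∃ b, j ≠ k → φ (y j) b ≠ φ (y k) b := by
    by_contra! h
    obtain ⟨b⟩ := ‹Nonempty K›
    exact (h b).1 (Function.update_injective x p.1 (hinj (funext fun b => (h b).2)))
  choose diff hdiff using hdiff
  obtain ⟨γ, hγ⟩ := Finite.exists_le fun jk : B × B => diff jk.1 jk.2
  choose δ hδ hmem using fun j =>
    exists_gt_xRes_mem_selfDetermining hω hφ (y j) (max γ p.1)
  refine ⟨fun j => xRes K (y j) (δ j), fun j => ⟨hmem j, ?_⟩, fun j k h => ?_⟩
  · have hext := ndExt_xRes (y j) ((le_max_right γ p.1).trans (hδ j).le)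
    rwa [hy] at hext
  · by_contra hjk
    rw [nodeMap_eq (hmem j) rfl, nodeMap_eq (hmem k) rfl] at h
    have hlt : diff j k < δ k := (hγ (j, k)).trans_lt ((le_max_left γ p.1).trans_lt (hδ k))
    exact hdiff j k hjk (h.2 ⟨_, hlt⟩)

theorem exists_isPerfectEmbedding_of_continuous [Finite B] [Nontrivial B]
    (hcof : ∀ b : K, #(Iio b) < Order.cof K) (hinj : Function.Injective φ) {T : Set (Nd K Y)}
    (hφT : range φ ⊆ body K T) : ∃ ι : Nd K B → Nd K Y, (∀ u, ι u ∈ T) ∧ IsPerfectEmbedding ι := by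
  have hne : (selfDetermining φ).Nonempty := by
    obtain ⟨δ, -, hδ⟩ := exists_gt_xRes_mem_selfDetermining hω hφ
      (fun _ => Classical.arbitrary B) (Classical.arbitrary K)
    exact ⟨_, hδ⟩
  obtain ⟨e, -, he⟩ := exists_isPerfectEmbedding_of_splitting hcof hne
    (limitClosed_selfDetermining φ) (π := nodeMap φ) (fun _ => rfl)
    (fun _ hp _ _ => ndExt_nodeMap hp)
    fun p _ => exists_splitting_selfDetermining hω hφ hinj p
  exact ⟨_, fun u => hφT (mem_range_self _) _, he⟩

omit hφ in
theorem exists_isPerfectEmbedding_of_nodeContinuous [Finite B] [Nontrivial B] [Nonempty Y]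
    (hcof : ∀ b : K, #(Iio b) < Order.cof K) {ι : Nd K B → Nd K Y}
    (hmono : ∀ u u', NdExt K u' u → NdExt K (ι u') (ι u)) (hinj : Function.Injective ι)
    (hcont : NodeContinuous ι) {T : Set (Nd K Y)} (hT : IsSubtree K T) (hιT : ∀ u, ι u ∈ T) :
    ∃ ι' : Nd K B → Nd K Y, (∀ u, ι' u ∈ T) ∧ IsPerfectEmbedding ι' :=
  exists_isPerfectEmbedding_of_continuous hω (continuous_branchMap hmono hinj) hcof
    (injective_branchMap_of_aleph0_lt_cof hω hmono hinj hcont)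
    (range_branchMap_subset_body hmono hinj hT hιT)

end ContinuousInjection

section PerfectTree

variable {K : Type u} [LinearOrder K] {S : Set (Nd K K)}

theorem PerfectTree.exists_splitting (hS : PerfectTree K S) {p : Nd K K} (hp : p ∈ S) :
    ∃ s : ULift.{u} Bool → Nd K K, (∀ j, s j ∈ S ∧ NdExt K (s j) p) ∧
      ∀ j k, NdExt K (s j) (s k) → j = k := by
  obtain ⟨q, -, hqp, _, ⟨r, hr, hqr, hrq, rfl⟩, _, ⟨r', hr', hqr', hrq', rfl⟩, hne⟩ :=
    hS.2.2.2 p hp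
  refine ⟨fun j => bif j.down then r else r', ?_, ?_⟩
  · rintro ⟨_ | _⟩
    · exact ⟨hr', NdExt.trans ⟨hqr'.le, hrq'⟩ hqp⟩
    · exact ⟨hr, NdExt.trans ⟨hqr.le, hrq⟩ hqp⟩
  · rintro ⟨_ | _⟩ ⟨_ | _⟩ h
    · rfl
    · exact absurd (h.2 ⟨q.1, hqr⟩).symm hne
    · exact absurd (h.2 ⟨q.1, hqr'⟩) hne
    · rfl

theorem PerfectTree.exists_isPerfectEmbedding [WellFoundedLT K]
    (hcof : ∀ b : K, #(Iio b) < Order.cof K) (hS : PerfectTree K S) :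
    ∃ ι : Nd K (ULift.{u} Bool) → Nd K K, (∀ u, ι u ∈ S) ∧ IsPerfectEmbedding ι := by
  obtain ⟨⟨b, _⟩, _⟩ := hS.1
  have : Nonempty K := ⟨b⟩
  exact exists_isPerfectEmbedding_of_splitting hcof hS.1 (hS.2.1.limitClosed hS.2.2.1) (π := id)
    (fun _ => rfl) (fun _ _ _ _ => id) fun _ => hS.exists_splitting

end PerfectTree

section Equivalences

variable {K : Type u} [LinearOrder K]

theorem IsPerfectEmbedding.homeoToCantor [WellFoundedLT K] [NoMaxOrder K] [Nonempty K]
    {ι : Nd K (ULift.{u} Bool) → Nd K K} (hι : IsPerfectEmbedding ι) :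
    HomeoToCantor K (range (branchMap ι)) := by
  let _ := bTop K K
  let _ := bTop K (ULift.{u} Bool)
  exact ⟨hι.isClosedEmbedding_branchMap.isEmbedding.toHomeomorph.symm⟩

theorem HomeoToCantor.exists_continuous_injective {C : Set (K → K)} (hC : HomeoToCantor K C) :
    ∃ i : (K → ULift.{u} Bool) → (K → K), Continuous[bTop K (ULift.{u} Bool), bTop K K] i ∧
      Function.Injective i ∧ range i = C := by
  let _ := bTop K K
  let _ := bTop K (ULift.{u} Bool)
  obtain ⟨f⟩ := hC
  refine ⟨Subtype.val ∘ f.symm, continuous_subtype_val.comp f.symm.continuous,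
    Subtype.val_injective.comp f.symm.injective, ?_⟩
  rw [f.symm.surjective.range_comp, Subtype.range_coe]

end Equivalences

theorem perfect_closed_tree_embedding_equivalences_general (K : Type u) [LinearOrder K]
    [WellFoundedLT K] (hseg : ∀ b : K, #(Set.Iio b) < #K)
    (hunc : ℵ₀ < #K) (hreg : (#K).IsRegular)
    (T : Set (Nd K K)) (hT : IsSubtree K T) :
    ((∃ C ⊆ body K T, IsClosed[bTop K K] C ∧ HomeoToCantor K C) ↔
      (∃ i : (K → ULift.{u} Bool) → (K → K),
        Continuous[bTop K (ULift.{u} Bool), bTop K K] i ∧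
        Function.Injective i ∧ Set.range i ⊆ body K T)) ∧
    ((∃ i : (K → ULift.{u} Bool) → (K → K),
        Continuous[bTop K (ULift.{u} Bool), bTop K K] i ∧
        Function.Injective i ∧ Set.range i ⊆ body K T) ↔
      (∃ ι : Nd K (ULift.{u} Bool) → Nd K K, (∀ u, ι u ∈ T) ∧
        Function.Injective ι ∧
        (∀ u u' : Nd K (ULift.{u} Bool), NdExt K u' u → NdExt K (ι u') (ι u)) ∧
        (∀ u : Nd K (ULift.{u} Bool), IsLimElt K u.1 → ∀ d, d < (ι u).1 →
          ∃ c, ∃ h : c < u.1, d < (ι (ndRes K u c h.le)).1))) ∧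
    ((∃ ι : Nd K (ULift.{u} Bool) → Nd K K, (∀ u, ι u ∈ T) ∧
        Function.Injective ι ∧
        (∀ u u' : Nd K (ULift.{u} Bool), NdExt K u' u → NdExt K (ι u') (ι u)) ∧
        (∀ u : Nd K (ULift.{u} Bool), IsLimElt K u.1 → ∀ d, d < (ι u).1 →
          ∃ c, ∃ h : c < u.1, d < (ι (ndRes K u c h.le)).1)) ↔
      (∃ S, S ⊆ T ∧ PerfectTree K S)) := by
  have hcofK : Order.cof K = #K := cof_eq_mk_of_isRegular hseg hreg
  have hω : ℵ₀ < Order.cof K := hcofK ▸ hunc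
  have hcof : ∀ b : K, #(Iio b) < Order.cof K := hcofK ▸ hseg
  have : Nonempty K := mk_ne_zero_iff.1 (aleph0_pos.trans hunc).ne'
  have : NoMaxOrder K := noMaxOrder_of_aleph0_lt_cof hω
  refine ⟨⟨?_, ?_⟩, ⟨?_, ?_⟩, ⟨?_, ?_⟩⟩
  · rintro ⟨C, hCT, -, hC⟩
    obtain ⟨i, hi, hinj, rfl⟩ := hC.exists_continuous_injective
    exact ⟨i, hi, hinj, hCT⟩
  · rintro ⟨i, hi, hinj, hiT⟩
    obtain ⟨ι, hιT, hι⟩ := exists_isPerfectEmbedding_of_continuous hω hi hcof hinj hiT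
    exact ⟨_, range_branchMap_subset_body hι.monotone hι.injective hT hιT,
      hι.isClosed_range_branchMap, hι.homeoToCantor⟩
  · rintro ⟨i, hi, hinj, hiT⟩
    obtain ⟨ι, hιT, hι⟩ := exists_isPerfectEmbedding_of_continuous hω hi hcof hinj hiT
    exact ⟨ι, hιT, hι.injective, hι.monotone, hι.continuous⟩
  · rintro ⟨ι, hιT, hinj, hmono, hcont⟩
    exact ⟨branchMap ι, continuous_branchMap hmono hinj,
      injective_branchMap_of_aleph0_lt_cof hω hmono hinj hcont,
      range_branchMap_subset_body hmono hinj hT hιT⟩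
  · rintro ⟨ι, hιT, hinj, hmono, hcont⟩
    obtain ⟨ι', hιT', hι'⟩ :=
      exists_isPerfectEmbedding_of_nodeContinuous hω hcof hmono hinj hcont hT hιT
    exact ⟨_, initSegTree_subset (range_branchMap_subset_body hι'.monotone hι'.injective hT hιT'),
      hι'.perfectTree_initSegTree⟩
  · rintro ⟨S, hST, hS⟩
    obtain ⟨ι, hιS, hι⟩ := hS.exists_isPerfectEmbedding hcof
    exact ⟨ι, fun u => hST (hιS u), hι.injective, hι.monotone, hι.continuous⟩

/-- For a subtree `T ⊆ K^{<K}` the following are equivalent: (1) `[T]`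
contains a closed copy of the Cantor space `K → 2`; (2) there is a continuous
injection of `K → 2` into `[T]`; (3) there is an inclusion-preserving continuous
injection of `2^{<K}` into `T`; (4) `T` contains a perfect subtree. -/
theorem perfect_closed_tree_embedding_equivalences (K : Type u) [LinearOrder K] [WellFoundedLT K]
    (hseg : ∀ b : K, #(Set.Iio b) < #K)
    (hunc : ℵ₀ < #K) (hpow : Cardinal.powerlt #K #K = #K)
    (T : Set (Nd K K)) (hT : IsSubtree K T) :
    ((∃ C ⊆ body K T, IsClosed[bTop K K] C ∧ HomeoToCantor K C) ↔
      (∃ i : (K → ULift.{u} Bool) → (K → K),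
        Continuous[bTop K (ULift.{u} Bool), bTop K K] i ∧
        Function.Injective i ∧ Set.range i ⊆ body K T)) ∧
    ((∃ i : (K → ULift.{u} Bool) → (K → K),
        Continuous[bTop K (ULift.{u} Bool), bTop K K] i ∧
        Function.Injective i ∧ Set.range i ⊆ body K T) ↔
      (∃ ι : Nd K (ULift.{u} Bool) → Nd K K, (∀ u, ι u ∈ T) ∧
        Function.Injective ι ∧
        (∀ u u' : Nd K (ULift.{u} Bool), NdExt K u' u → NdExt K (ι u') (ι u)) ∧
        (∀ u : Nd K (ULift.{u} Bool), IsLimElt K u.1 → ∀ d, d < (ι u).1 →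
          ∃ c, ∃ h : c < u.1, d < (ι (ndRes K u c h.le)).1))) ∧
    ((∃ ι : Nd K (ULift.{u} Bool) → Nd K K, (∀ u, ι u ∈ T) ∧
        Function.Injective ι ∧
        (∀ u u' : Nd K (ULift.{u} Bool), NdExt K u' u → NdExt K (ι u') (ι u)) ∧
        (∀ u : Nd K (ULift.{u} Bool), IsLimElt K u.1 → ∀ d, d < (ι u).1 →
          ∃ c, ∃ h : c < u.1, d < (ι (ndRes K u c h.le)).1)) ↔
      (∃ S, S ⊆ T ∧ PerfectTree K S)) :=
  perfect_closed_tree_embedding_equivalences_general K hseg hunc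
    (isRegular_of_powerlt_self hunc.le hpow) T hT
end

section
/- Let κ be a non-weakly compact uncountable cardinal with κ = κ^{<κ}. If every Σ¹₁ subset of κ^κ satisfies the Hurewicz dichotomy, then every Σ¹₁ subset of κ^κ is κ-Sacks measurable. -/
open Cardinal Set Topology

universe u

/-!
Fix a perfect tree `T` and mark at every node of `T` a left and a right immediate successor,
distinct at splitting nodes. A set `s` of levels then determines a branch of `T`, which goes right
exactly at the levels in `s`. A branch with unboundedly many right turns at splitting nodes is coded
by the function sending each level to the next such turn; these codes form a closed set `Z` on
which decoding is continuous and injective. Apply the dichotomy to the codes in `Z` of points of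
`A`. If they are covered by a `K_κ` set, they are eventually bounded by some `x`, and the perfect
subtrees of `T` all of whose branches have unboundedly many gaps between right turns that exceed `x`
miss `A`. Otherwise a closed copy of `κ^κ` consists of codes of points of `A`, and decoding maps it
continuously and injectively into `A ∩ [T]`. In both cases the perfect subtree comes from one fusion
lemma: a continuous map that is not constant on any basic open set maps the intersection of `κ`
many dense open sets onto a superset of the body of a perfect tree.
-/

namespace GeneralizedBaire

section Regularity

variable {K : Type u} [LinearOrder K]

theorem isRegular_of_powerlt_self {c : Cardinal.{u}} (hc : ℵ₀ ≤ c) (hpow : c ^< c = c) :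
    c.IsRegular where
  aleph0_le := hc
  le_cof_ord := by
    by_contra! hcof
    exact (lt_power_cof_ord hc).not_ge ((le_powerlt c hcof).trans hpow.le)

theorem noMaxOrder_of_mk_Iio_lt (hK : ℵ₀ ≤ #K) (hseg : ∀ b : K, #(Iio b) < #K) :
    NoMaxOrder K where
  exists_gt b := by
    by_contra! hb
    have huniv : insert b (Iio b) = Set.univ := by
      rw [Iio_insert]
      exact eq_univ_of_forall hb
    have hle : #K ≤ #(Iio b) + 1 := by
      rw [← mk_univ, ← huniv]
      exact mk_insert_le
    exact hle.not_gt (add_lt_of_lt hK (hseg b) (one_lt_aleph0.trans_le hK))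

theorem bddAbove_of_mk_lt (hseg : ∀ b : K, #(Iio b) < #K) (hreg : (#K).IsRegular) {s : Set K}
    (hs : #s < #K) : BddAbove s := by
  by_contra hunb
  have hcover : ⋃ b ∈ s, Iio b = Set.univ := by
    refine eq_univ_of_forall fun c => ?_
    obtain ⟨b, hb, hcb⟩ := not_bddAbove_iff.1 hunb c
    exact mem_biUnion hb hcb
  have hlt : #(⋃ b ∈ s, Iio b) < #K :=
    (card_biUnion_lt_iff_forall_of_isRegular hreg hs).2 fun b _ => hseg b
  rw [hcover, mk_univ] at hlt
  exact hlt.false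

end Regularity

section Cylinder

variable {K : Type u} [LinearOrder K] {Y : Type*}

/-- The basic open set of all functions with the same restriction to `b` as `x`. -/
def cylinder (x : K → Y) (b : K) : Set (K → Y) := {y | EqOn y x (Iio b)}

theorem mem_cylinder_self (x : K → Y) (b : K) : x ∈ cylinder x b := fun _ _ => rfl

theorem cylinder_antitone (x : K → Y) : Antitone (cylinder x) :=
  fun _ _ hbc _ hy => hy.mono (Iio_subset_Iio hbc)

theorem cylinder_subset_of_mem {x y : K → Y} {b : K} (hy : y ∈ cylinder x b) :
    cylinder y b ⊆ cylinder x b := fun _ hw => hw.trans hy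

theorem exists_eqOn_Iio_ne [WellFoundedLT K] {x y : K → Y} (hxy : x ≠ y) :
    ∃ d, EqOn x y (Iio d) ∧ x d ≠ y d := by
  obtain ⟨d, hd, hmin⟩ := wellFounded_lt.has_min {i | x i ≠ y i} (Function.ne_iff.1 hxy)
  exact ⟨d, fun i hi => not_not.1 fun hne => hmin i hne hi, hd⟩

end Cylinder

section Topology

variable {K Y Z : Type u} [LinearOrder K]

attribute [local instance] bTop

theorem isOpen_cylinder (x : K → Y) (b : K) : IsOpen (cylinder x b) :=
  TopologicalSpace.GenerateOpen.basic _ ⟨b, x, rfl⟩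

theorem isOpen_iff_cylinder_subset [Nonempty K] {U : Set (K → Y)} :
    IsOpen U ↔ ∀ x ∈ U, ∃ b, cylinder x b ⊆ U := by
  refine ⟨fun h => ?_, fun h => isOpen_iff_forall_mem_open.2 fun x hx => ?_⟩
  · change TopologicalSpace.GenerateOpen _ U at h
    induction h with
    | basic V hV =>
      obtain ⟨b, s, rfl⟩ := hV
      exact fun x hx => ⟨b, cylinder_subset_of_mem hx⟩
    | univ => exact fun _ _ => ⟨Classical.arbitrary K, subset_univ _⟩
    | inter V W _ _ ihV ihW =>
      intro x hx
      obtain ⟨b, hb⟩ := ihV x hx.1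
      obtain ⟨c, hc⟩ := ihW x hx.2
      exact ⟨max b c, subset_inter ((cylinder_antitone x (le_max_left b c)).trans hb)
        ((cylinder_antitone x (le_max_right b c)).trans hc)⟩
    | sUnion S _ ih =>
      rintro x ⟨V, hV, hx⟩
      obtain ⟨b, hb⟩ := ih V hV x hx
      exact ⟨b, hb.trans (subset_sUnion_of_mem hV)⟩
  · obtain ⟨b, hb⟩ := h x hx
    exact ⟨_, hb, isOpen_cylinder x b, mem_cylinder_self x b⟩

theorem continuous_iff_mapsTo_cylinder [Nonempty K] {f : (K → Y) → K → Z} :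
    Continuous f ↔ ∀ x b, ∃ c, MapsTo f (cylinder x c) (cylinder (f x) b) := by
  refine ⟨fun hf x b => ?_, fun h => continuous_def.2 fun U hU => ?_⟩
  · exact isOpen_iff_cylinder_subset.1 ((isOpen_cylinder (f x) b).preimage hf) x
      (mem_cylinder_self _ _)
  · refine isOpen_iff_cylinder_subset.2 fun x hx => ?_
    obtain ⟨b, hb⟩ := isOpen_iff_cylinder_subset.1 hU (f x) hx
    obtain ⟨c, hc⟩ := h x b
    exact ⟨c, fun y hy => hb (hc hy)⟩

theorem sigma11_inter_preimage {A Z : Set (K → K)} {f : (K → K) → K → K} (hA : Sigma11 K A)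
    (hf : Continuous f) (hZ : IsClosed Z) : Sigma11 K (Z ∩ f ⁻¹' A) := by
  obtain ⟨C, hC, rfl⟩ := hA
  refine ⟨{p | p.1 ∈ Z ∧ (f p.1, p.2) ∈ C}, (hZ.preimage continuous_fst).inter
    (hC.preimage ((hf.comp continuous_fst).prodMk continuous_snd)), ?_⟩
  ext z
  constructor
  · rintro ⟨hz, ⟨_, w⟩, hC, rfl⟩
    exact ⟨(z, w), ⟨hz, hC⟩, rfl⟩
  · rintro ⟨⟨_, w⟩, ⟨hz, hC⟩, rfl⟩
    exact ⟨hz, _, hC, rfl⟩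

end Topology

section Bounded

variable {K : Type u} [LinearOrder K] [NoMaxOrder K]

theorem bddSet_of_kCompact (hbdd : ∀ s : Set K, #s < #K → BddAbove s) {C : Set (K → K)}
    (hC : KCompact K C) : BddSet K C := by
  have hcoord : ∀ i, ∃ a, ∀ y ∈ C, y i ≤ a := by
    intro i
    have hne : Nonempty K := ⟨i⟩
    have hopen : ∀ a, IsOpen[bTop K K] {y : K → K | y i = a} := by
      intro a
      refine isOpen_iff_cylinder_subset.2 fun x hx => ?_
      obtain ⟨b, hb⟩ := exists_gt i
      exact ⟨b, fun y hy => (hy hb).trans hx⟩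
    obtain ⟨𝒱, h𝒱, hcard, hcover⟩ := hC (range fun a => {y : K → K | y i = a})
      (forall_mem_range.2 hopen) fun y _ => ⟨_, ⟨y i, rfl⟩, rfl⟩
    choose! value hvalue using fun V (hV : V ∈ 𝒱) => h𝒱 hV
    obtain ⟨a, ha⟩ := hbdd (value '' 𝒱) (mk_image_le.trans_lt hcard)
    refine ⟨a, fun y hy => ?_⟩
    obtain ⟨V, hV, hyV⟩ := hcover hy
    rw [← hvalue V hV] at hyV
    exact hyV.trans_le (ha (mem_image_of_mem value hV))
  choose x hx using hcoord
  exact ⟨x, fun y hy i => hx i y hy⟩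

theorem evBddSet_of_isKK (hbdd : ∀ s : Set K, #s < #K → BddAbove s)
    (hseg : ∀ b : K, #(Iio b) < #K) {B : Set (K → K)} (hB : IsKK K B) : EvBddSet K B := by
  obtain ⟨C, hC, rfl⟩ := hB
  choose x hx using fun b => bddSet_of_kCompact hbdd (hC b)
  choose y hy using fun i =>
    hbdd ((fun b => x b i) '' Iio i) (mk_image_le.trans_lt (hseg i))
  refine ⟨y, fun z hz => ?_⟩
  obtain ⟨b, hb⟩ := mem_iUnion.1 hz
  obtain ⟨c, hbc⟩ := exists_gt b
  exact ⟨c, fun i hi => (hx b z hb i).trans (hy i ⟨b, hbc.trans_le hi, rfl⟩)⟩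

end Bounded

section Tree

variable {K : Type u} [LinearOrder K] {Y : Type u}

theorem exists_eq_xRes [Nonempty Y] (p : Nd K Y) : ∃ x b, p = xRes K x b := by
  classical
  let x : K → Y := fun i => if h : i < p.1 then p.2 ⟨i, h⟩ else Classical.arbitrary Y
  have hx : ∀ i : Iio p.1, x i = p.2 i := fun i => dif_pos (mem_Iio.1 i.2)
  exact ⟨x, p.1, Sigma.ext rfl (heq_of_eq (funext fun i => (hx i).symm))⟩

theorem xRes_eq_xRes_iff {x y : K → Y} {b : K} :
    xRes K x b = xRes K y b ↔ EqOn x y (Iio b) := by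
  refine ⟨fun h i hi => ?_, fun h => Sigma.ext rfl (heq_of_eq (funext fun i => h i.2))⟩
  exact congrFun (eq_of_heq (Sigma.mk.inj h).2) ⟨i, hi⟩

theorem ndExt_xRes_iff {x y : K → Y} {b d : K} :
    NdExt K (xRes K y d) (xRes K x b) ↔ b ≤ d ∧ y ∈ cylinder x b :=
  ⟨fun ⟨hbd, h⟩ => ⟨hbd, fun i hi => h ⟨i, hi⟩⟩, fun ⟨hbd, h⟩ => ⟨hbd, fun i => h i.2⟩⟩

theorem mem_splitVals_xRes {T : Set (Nd K Y)} {x y : K → Y} {b d : K} (hy : xRes K y d ∈ T)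
    (hbd : b < d) (hyx : y ∈ cylinder x b) : y b ∈ splitVals K T (xRes K x b) :=
  ⟨_, hy, hbd, fun i => hyx i.2, rfl⟩

theorem xRes_mem_of_covBy {T : Set (Nd K Y)} (hT : IsSubtree K T) {x : K → Y} {c b : K}
    (hcb : c ⋖ b) (hx : x c ∈ splitVals K T (xRes K x c)) : xRes K x b ∈ T := by
  obtain ⟨q, hq, hcq, hqx, hqc⟩ := hx
  have hbq : b ≤ q.1 := hcb.ge_of_gt hcq
  suffices xRes K x b = ndRes K q b hbq from this ▸ hT q hq b hbq
  refine Sigma.ext rfl (heq_of_eq (funext fun i => ?_))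
  rcases (hcb.le_of_lt i.2).lt_or_eq with hic | hic
  · exact (hqx ⟨i, hic⟩).symm
  · obtain ⟨i, hi⟩ := i
    obtain rfl : i = c := hic
    exact hqc.symm

theorem mem_body_of_forall_mem_splitVals [WellFoundedLT K] {T : Set (Nd K Y)} (hne : T.Nonempty)
    (hsub : IsSubtree K T) (hsup : Superclosed K T) {x : K → Y}
    (hx : ∀ c, xRes K x c ∈ T → x c ∈ splitVals K T (xRes K x c)) : x ∈ body K T := by
  intro b
  induction b using WellFoundedLT.induction with
  | ind b ih =>
    by_cases hmin : IsMin b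
    · obtain ⟨r, hr⟩ := hne
      have hbr : b ≤ r.1 := hmin.isBot r.1
      suffices xRes K x b = ndRes K r b hbr from this ▸ hsub r hr b hbr
      exact Sigma.ext rfl (heq_of_eq (funext fun i => (hmin.not_lt i.2).elim))
    by_cases hsucc : ∃ c, c ⋖ b
    · obtain ⟨c, hcb⟩ := hsucc
      exact xRes_mem_of_covBy hsub hcb (hx c (ih c hcb.lt))
    · have hlim : ∀ c < b, ∃ d, c < d ∧ d < b := by
        push Not at hsucc
        exact fun c hc => exists_lt_lt_of_not_covBy hc (hsucc c)
      exact hsup _ ⟨not_isMin_iff.1 hmin, hlim⟩ ih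

theorem splitVals_nonempty {T : Set (Nd K K)} (hT : PerfectTree K T) {p : Nd K K} (hp : p ∈ T) :
    (splitVals K T p).Nonempty := by
  obtain ⟨q, -, ⟨hpq, hqp⟩, a, ⟨r, hr, hqr, hrq, -⟩, -⟩ := hT.2.2.2 p hp
  exact ⟨_, r, hr, hpq.trans_lt hqr, fun i => (hrq ⟨i, i.2.trans_le hpq⟩).trans (hqp i), rfl⟩

theorem exists_nontrivial_splitVals_xRes [NoMaxOrder K] [WellFoundedLT K] {T : Set (Nd K K)}
    (hT : PerfectTree K T) {x : K → K} (hx : x ∈ body K T) (c : K) :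
    ∃ j ≥ c, (splitVals K T (xRes K x j)).Nontrivial := by
  have hne : Nonempty K := ⟨c⟩
  obtain ⟨q, hq, hqc, hsplit⟩ := hT.2.2.2 _ (hx c)
  obtain ⟨y, d, rfl⟩ := exists_eq_xRes q
  obtain ⟨hcd, hyc⟩ := ndExt_xRes_iff.1 hqc
  by_cases hyd : EqOn y x (Iio d)
  · exact ⟨d, hcd, xRes_eq_xRes_iff.2 hyd ▸ hsplit⟩
  · have hxy : y ≠ x := fun h => hyd (h ▸ eqOn_refl y _)
    obtain ⟨j, hyj, hne⟩ := exists_eqOn_Iio_ne hxy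
    obtain ⟨k, hjk⟩ := exists_gt j
    have hcj : c ≤ j := not_lt.1 fun hjc => hne (hyc hjc)
    have hjd : j < d := not_le.1 fun hdj => hyd (hyj.mono (Iio_subset_Iio hdj))
    exact ⟨j, hcj, _, mem_splitVals_xRes hq hjd hyj, _,
      mem_splitVals_xRes (hx k) hjk (mem_cylinder_self x j), hne⟩

theorem subset_of_pruned {S T : Set (Nd K Y)} (hS : Pruned K S) (hST : body K S ⊆ body K T) :
    S ⊆ T := by
  intro p hp
  obtain ⟨x, hx, _, hxp⟩ := hS p hp
  suffices xRes K x p.1 = p from this ▸ hST hx p.1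
  exact Sigma.ext rfl (heq_of_eq (funext hxp))

end Tree

section InitialSegments

variable {K : Type u} [LinearOrder K] {Y : Type u}

/-- The tree of initial segments of elements of `X`. -/
def initialSegments (X : Set (K → Y)) : Set (Nd K Y) := {p | ∃ x ∈ X, xRes K x p.1 = p}

/-- Closure of `X` under unions of chains of initial segments, of any length up to `κ`: if many
initial segments of a fixed `x` are initial segments of elements of `X`, a single element of `X`
witnesses this for all of them. -/
def ChainClosed (X : Set (K → Y)) : Prop :=
  ∀ (x : K → Y) (C : Set K), (∀ c ∈ C, (X ∩ cylinder x c).Nonempty) →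
    (X ∩ ⋂ c ∈ C, cylinder x c).Nonempty

theorem xRes_mem_initialSegments_iff {X : Set (K → Y)} {x : K → Y} {b : K} :
    xRes K x b ∈ initialSegments X ↔ (X ∩ cylinder x b).Nonempty :=
  exists_congr fun _ => and_congr_right fun _ => xRes_eq_xRes_iff

theorem subset_body_initialSegments (X : Set (K → Y)) : X ⊆ body K (initialSegments X) :=
  fun x hx _ => ⟨x, hx, rfl⟩

theorem body_initialSegments [NoMaxOrder K] {X : Set (K → Y)} (hX : ChainClosed X) :
    body K (initialSegments X) = X := by
  refine Subset.antisymm (fun x hx => ?_) (subset_body_initialSegments X)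
  obtain ⟨y, hy, hyx⟩ := hX x univ fun c _ => xRes_mem_initialSegments_iff.1 (hx c)
  suffices y = x from this ▸ hy
  funext i
  obtain ⟨c, hc⟩ := exists_gt i
  exact mem_iInter₂.1 hyx c (mem_univ c) hc

theorem pruned_initialSegments (X : Set (K → Y)) : Pruned K (initialSegments X) := by
  rintro p ⟨x, hx, hxp⟩
  refine ⟨x, subset_body_initialSegments X hx, ?_⟩
  rw [hxp]
  exact ⟨le_rfl, fun _ => rfl⟩

theorem isSubtree_initialSegments (X : Set (K → Y)) : IsSubtree K (initialSegments X) := by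
  rintro ⟨b, s⟩ ⟨x, hx, hxs⟩ c hc
  obtain rfl : s = fun i : Iio b => x i := (eq_of_heq (Sigma.mk.inj hxs).2).symm
  exact ⟨x, hx, rfl⟩

theorem superclosed_initialSegments [Nonempty Y] {X : Set (K → Y)} (hX : ChainClosed X) :
    Superclosed K (initialSegments X) := by
  intro p hlim hp
  obtain ⟨x, b, rfl⟩ := exists_eq_xRes p
  obtain ⟨y, hy, hyx⟩ := hX x (Iio b) fun c hc => xRes_mem_initialSegments_iff.1 (hp c hc)
  refine xRes_mem_initialSegments_iff.2 ⟨y, hy, fun i hi => ?_⟩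
  obtain ⟨c, hic, hcb⟩ := hlim.2 i hi
  exact mem_iInter₂.1 hyx c hcb hic

theorem perfectTree_initialSegments [Nonempty K] [NoMaxOrder K] [WellFoundedLT K]
    {X : Set (K → K)} (hne : X.Nonempty) (hX : ChainClosed X)
    (hacc : ∀ x ∈ X, ∀ b, ∃ y ∈ X ∩ cylinder x b, y ≠ x) :
    PerfectTree K (initialSegments X) := by
  refine ⟨?_, isSubtree_initialSegments X, superclosed_initialSegments hX, ?_⟩
  · obtain ⟨x, hx⟩ := hne
    exact ⟨_, subset_body_initialSegments X hx (Classical.arbitrary K)⟩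
  · intro p hp
    obtain ⟨x, b, rfl⟩ := exists_eq_xRes p
    obtain ⟨y, hy, hyx⟩ := xRes_mem_initialSegments_iff.1 hp
    obtain ⟨z, ⟨hz, hzy⟩, hne⟩ := hacc y hy b
    obtain ⟨d, hzd, hzyd⟩ := exists_eqOn_Iio_ne hne
    obtain ⟨e, hde⟩ := exists_gt d
    have hbd : b ≤ d := not_lt.1 fun hdb => hzyd (hzy hdb)
    have hbody := subset_body_initialSegments X
    exact ⟨xRes K y d, hbody hy d, ndExt_xRes_iff.2 ⟨hbd, hyx⟩,
      _, mem_splitVals_xRes (hbody hz e) hde hzd,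
      _, mem_splitVals_xRes (hbody hy e) hde (mem_cylinder_self y d), hzyd⟩

end InitialSegments

section SplitScheme

variable {K : Type u} [LinearOrder K] {Y : Type u}

/-- `Ψ` lists the branches of a binary tree whose `α`-th splitting level along the branch `Ψ x` is
`D x α`: branches whose indices first differ at `α` separate exactly there. -/
structure IsSplitScheme (Ψ : (K → Bool) → K → Y) (D : (K → Bool) → K → K) : Prop where
  strictMono : ∀ x, StrictMono (D x)
  eqOn : ∀ x y α, EqOn x y (Iio α) → x α ≠ y α → EqOn (Ψ x) (Ψ y) (Iio (D x α))
  ne : ∀ x y α, EqOn x y (Iio α) → x α ≠ y α → Ψ x (D x α) ≠ Ψ y (D x α)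

namespace IsSplitScheme

variable [WellFoundedLT K] {Ψ : (K → Bool) → K → Y} {D : (K → Bool) → K → K}

theorem eqOn_Iio_iff (h : IsSplitScheme Ψ D) {x y : K → Bool} {c : K} :
    EqOn (Ψ x) (Ψ y) (Iio c) ↔ ∀ α, D x α < c → x α = y α := by
  by_cases hxy : x = y
  · simp only [hxy, eqOn_refl, implies_true]
  obtain ⟨α, heq, hne⟩ := exists_eqOn_Iio_ne hxy
  constructor
  · intro hΨ β hβ
    by_contra hβne
    have hαβ : α ≤ β := not_lt.1 fun hβα => hβne (heq hβα)
    exact h.ne x y α heq hne (hΨ (((h.strictMono x).monotone hαβ).trans_lt hβ))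
  · intro hD
    have hc : c ≤ D x α := not_lt.1 fun hα => hne (hD α hα)
    exact (h.eqOn x y α heq hne).mono (Iio_subset_Iio hc)

theorem chainClosed_range (h : IsSplitScheme Ψ D) : ChainClosed (range Ψ) := by
  classical
  intro p C hC
  have hindex : ∀ c ∈ C, ∃ x, EqOn (Ψ x) p (Iio c) := by
    intro c hc
    obtain ⟨_, ⟨x, rfl⟩, hx⟩ := hC c hc
    exact ⟨x, hx⟩
  choose! f hf using hindex
  have hcompat : ∀ c ∈ C, ∀ c' ∈ C, ∀ α, D (f c) α < c → D (f c') α < c' → f c α = f c' α := by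
    intro c hc c' hc' α hα hα'
    rcases le_total c c' with hcc' | hcc'
    · have heq := (hf c hc).trans ((hf c' hc').mono (Iio_subset_Iio hcc')).symm
      exact h.eqOn_Iio_iff.1 heq α hα
    · have heq := (hf c' hc').trans ((hf c hc).mono (Iio_subset_Iio hcc')).symm
      exact (h.eqOn_Iio_iff.1 heq α hα').symm
  let x : K → Bool := fun α => if hα : ∃ c ∈ C, D (f c) α < c then f hα.choose α else false
  refine ⟨Ψ x, mem_range_self x, mem_iInter₂.2 fun c hc => ?_⟩
  refine (h.eqOn_Iio_iff.2 fun α hα => ?_).symm.trans (hf c hc)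
  have hex : ∃ c ∈ C, D (f c) α < c := ⟨c, hc, hα⟩
  have hx : x α = f hex.choose α := dif_pos hex
  rw [hx]
  exact hcompat c hc _ hex.choose_spec.1 α hα hex.choose_spec.2

theorem exists_mem_range_inter_cylinder_ne (h : IsSplitScheme Ψ D) (x : K → Bool) (b : K) :
    ∃ y ∈ range Ψ ∩ cylinder (Ψ x) b, y ≠ Ψ x := by
  classical
  let y := Function.update x b (!x b)
  have heq : EqOn x y (Iio b) := fun i hi => (Function.update_of_ne (ne_of_lt hi) _ _).symm
  have hne : x b ≠ y b := by simp [y]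
  have hb : b ≤ D x b := (h.strictMono x).le_apply
  refine ⟨Ψ y, ⟨mem_range_self y, ?_⟩, fun hyx => h.ne x y b heq hne (by rw [hyx])⟩
  exact ((h.eqOn x y b heq hne).mono (Iio_subset_Iio hb)).symm

end IsSplitScheme

theorem IsSplitScheme.perfectTree_initialSegments_range [WellFoundedLT K] [Nonempty K]
    [NoMaxOrder K] {Ψ : (K → Bool) → K → K} {D : (K → Bool) → K → K} (h : IsSplitScheme Ψ D) :
    PerfectTree K (initialSegments (range Ψ)) :=
  perfectTree_initialSegments (range_nonempty Ψ) h.chainClosed_range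
    (forall_mem_range.2 h.exists_mem_range_inter_cylinder_ne)

end SplitScheme

section Stages

variable {K : Type u} [LinearOrder K] {B P : Type*}

/-- The transfinite construction along `x : K → B` that at each `α` first passes to a limit `sup`
of all earlier stages and then applies `step`; `stage sup step x α` is the limit reached before
step `α`. -/
noncomputable def stage [WellFoundedLT K] (sup : ∀ α : K, (Iio α → P) → P) (step : K → B → P → P)
    (x : K → B) (α : K) : P :=
  sup α fun β : Iio α => step β.1 (x β.1) (stage sup step x β.1)
termination_by wellFounded_lt.wrap α
decreasing_by exact β.2

variable [WellFoundedLT K]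

theorem stage_congr (sup : ∀ α : K, (Iio α → P) → P) (step : K → B → P → P) {x y : K → B}
    {α : K} (hxy : EqOn x y (Iio α)) : stage sup step x α = stage sup step y α := by
  induction α using WellFoundedLT.induction with
  | ind α ih =>
    rw [stage, stage]
    congr 1
    funext β
    rw [hxy β.2, ih β.1 β.2 (hxy.mono (Iio_subset_Iio (le_of_lt β.2)))]

theorem step_stage_le_stage [Preorder P] {sup : ∀ α : K, (Iio α → P) → P} {step : K → B → P → P}
    (hsup : ∀ α f, Monotone f → ∀ β, f β ≤ sup α f) (hstep : ∀ α b p, p ≤ step α b p)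
    (x : K → B) {β α : K} (hβα : β < α) :
    step β (x β) (stage sup step x β) ≤ stage sup step x α := by
  induction α using WellFoundedLT.induction generalizing β with
  | ind α ih =>
    have hmono : Monotone fun β : Iio α => step β.1 (x β.1) (stage sup step x β.1) := by
      intro β γ hβγ
      rcases hβγ.lt_or_eq with hlt | rfl
      · exact (ih γ.1 γ.2 hlt).trans (hstep _ _ _)
      · exact le_rfl
    rw [stage.eq_def sup step x α]
    exact hsup α _ hmono ⟨β, hβα⟩

end Stages

/-- An approximation, of length `len`, to an element of `K → Y`; the values of `val` from
`len` on are irrelevant. -/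
structure Condition (K : Type*) (Y : Type*) where
  len : K
  val : K → Y

namespace Condition

variable {K : Type u} [LinearOrder K] {Y : Type*}

/-- The basic open set of the functions approximated by `p`. -/
def cyl (p : Condition K Y) : Set (K → Y) := cylinder p.val p.len

instance : Preorder (Condition K Y) where
  le p q := p.len ≤ q.len ∧ q.val ∈ p.cyl
  le_refl p := ⟨le_rfl, mem_cylinder_self _ _⟩
  le_trans _ _ _ hpq hqr := ⟨hpq.1.trans hqr.1,
    cylinder_subset_of_mem hpq.2 (cylinder_antitone _ hpq.1 hqr.2)⟩

theorem val_mem_cyl (p : Condition K Y) : p.val ∈ p.cyl := mem_cylinder_self _ _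

theorem cyl_antitone : Antitone (cyl : Condition K Y → Set (K → Y)) :=
  fun _ _ hpq => (cylinder_antitone _ hpq.1).trans (cylinder_subset_of_mem hpq.2)

theorem iInter_cyl_nonempty [Nonempty Y] {ι : Type*} [LinearOrder ι] {p : ι → Condition K Y}
    (hp : Monotone p) : (⋂ a, (p a).cyl).Nonempty := by
  classical
  refine ⟨fun i => if h : ∃ a, i < (p a).len then (p h.choose).val i else Classical.arbitrary Y,
    mem_iInter.2 fun a i hi => ?_⟩
  have h : ∃ a, i < (p a).len := ⟨a, hi⟩
  rw [dif_pos h]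
  rcases le_total h.choose a with hle | hle
  · exact ((hp hle).2 h.choose_spec).symm
  · exact (hp hle).2 hi

theorem bddAbove_range [Nonempty Y] {ι : Type*} [LinearOrder ι] {p : ι → Condition K Y}
    (hp : Monotone p) (hlen : BddAbove (range fun a => (p a).len)) : BddAbove (range p) := by
  obtain ⟨c, hc⟩ := hlen
  obtain ⟨w, hw⟩ := iInter_cyl_nonempty hp
  exact ⟨⟨c, w⟩, forall_mem_range.2 fun a => ⟨hc (mem_range_self a), mem_iInter.1 hw a⟩⟩

end Condition

section Fusion

variable {K Y : Type u} [LinearOrder K]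

attribute [local instance] bTop

/-- The extensions `q false` and `q true` of `p` force membership in `U`, decide `ψ` up to and
including the level `δ`, and separate its values exactly at `δ`. -/
structure IsSplitting (ψ : (K → Y) → K → K) (U : Set (K → Y)) (p : Condition K Y)
    (q : Bool → Condition K Y) (δ : K) : Prop where
  le : ∀ b, p ≤ q b
  cyl_subset : ∀ b, (q b).cyl ⊆ U
  eqOn_Iic : ∀ b, ∀ v ∈ (q b).cyl, EqOn (ψ v) (ψ (q b).val) (Iic δ)
  eqOn_Iio : ∀ b b', EqOn (ψ (q b).val) (ψ (q b').val) (Iio δ)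
  ne : ∀ b b', b ≠ b' → ψ (q b).val δ ≠ ψ (q b').val δ

theorem exists_isSplitting [WellFoundedLT K] [NoMaxOrder K] {ψ : (K → Y) → K → K}
    (hψ : Continuous ψ) {U : Set (K → Y)} (hU : IsOpen U)
    (hdense : ∀ p : Condition K Y, (U ∩ p.cyl).Nonempty)
    (hnonconst : ∀ p : Condition K Y, (ψ '' p.cyl).Nontrivial) (p : Condition K Y) :
    ∃ q δ, IsSplitting ψ U p q δ := by
  have hne : Nonempty K := ⟨p.len⟩
  obtain ⟨v, hvU, hvp⟩ := hdense p
  obtain ⟨c, hc⟩ := isOpen_iff_cylinder_subset.1 hU v hvU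
  let r : Condition K Y := ⟨max p.len c, v⟩
  have hpr : p ≤ r := ⟨le_max_left _ _, hvp⟩
  have hrU : r.cyl ⊆ U := (cylinder_antitone v (le_max_right _ _)).trans hc
  obtain ⟨_, ⟨w₀, hw₀, rfl⟩, _, ⟨w₁, hw₁, rfl⟩, hw⟩ := hnonconst r
  obtain ⟨δ, hδeq, hδne⟩ := exists_eqOn_Iio_ne hw
  obtain ⟨ε, hε⟩ := exists_gt δ
  choose m hm using fun w => continuous_iff_mapsTo_cylinder.1 hψ w ε
  let w : Bool → K → Y := fun b => cond b w₁ w₀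
  have hrw : ∀ b, w b ∈ r.cyl := Bool.forall_bool.2 ⟨hw₀, hw₁⟩
  let q : Bool → Condition K Y := fun b => ⟨max r.len (m (w b)), w b⟩
  have hrq : ∀ b, r ≤ q b := fun b => ⟨le_max_left _ _, hrw b⟩
  refine ⟨q, δ, fun b => hpr.trans (hrq b), fun b => (Condition.cyl_antitone (hrq b)).trans hrU,
    fun b v hv => ?_, ?_, ?_⟩
  · have hv' : v ∈ cylinder (w b) (m (w b)) := cylinder_antitone _ (le_max_right _ _) hv
    exact (hm (w b) hv').mono fun i hi => (mem_Iic.1 hi).trans_lt hε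
  · simp only [Bool.forall_bool]
    exact ⟨⟨eqOn_refl _ _, hδeq⟩, hδeq.symm, eqOn_refl _ _⟩
  · simp only [Bool.forall_bool]
    exact ⟨⟨fun h => absurd rfl h, fun _ => hδne⟩, fun _ => hδne.symm, fun h => absurd rfl h⟩

/-- A fusion system for `ψ`: the condition `p x α` depends only on the restriction of `x` to `α`,
is split by `q x α` at level `δ x α`, and the half chosen by `x α` is extended by all later
conditions along `x`. -/
structure IsFusion (ψ : (K → Y) → K → K) (U : K → Set (K → Y))
    (p : (K → Bool) → K → Condition K Y) (q : (K → Bool) → K → Bool → Condition K Y)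
    (δ : (K → Bool) → K → K) : Prop where
  congr_q : ∀ x y α, EqOn x y (Iio α) → q x α = q y α
  isSplitting : ∀ x α, IsSplitting ψ (U α) (p x α) (q x α) (δ x α)
  le : ∀ x {β α}, β < α → q x β (x β) ≤ p x α

theorem exists_isFusion [WellFoundedLT K] [NoMaxOrder K] [Nonempty Y]
    (hbdd : ∀ (α : K) (f : Iio α → K), BddAbove (range f)) {ψ : (K → Y) → K → K}
    (hψ : Continuous ψ) {U : K → Set (K → Y)} (hU : ∀ α, IsOpen (U α))
    (hdense : ∀ α, ∀ p : Condition K Y, (U α ∩ p.cyl).Nonempty)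
    (hnonconst : ∀ p : Condition K Y, (ψ '' p.cyl).Nontrivial) :
    ∃ p q δ, IsFusion ψ U p q δ := by
  choose q δ hsplit using fun α => exists_isSplitting hψ (hU α) (hdense α) hnonconst
  have hsup : ∀ (α : K) (f : Iio α → Condition K Y), ∃ r, Monotone f → ∀ β, f β ≤ r := by
    intro α f
    by_cases hf : Monotone f
    · obtain ⟨r, hr⟩ := Condition.bddAbove_range hf (hbdd α _)
      exact ⟨r, fun _ => forall_mem_range.1 hr⟩
    · exact ⟨⟨α, fun _ => Classical.arbitrary Y⟩, fun h => absurd h hf⟩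
  choose sup hsup using hsup
  let p := stage sup fun α b p => q α p b
  exact ⟨p, fun x α => q α (p x α), fun x α => δ α (p x α),
    fun x y α hxy => by simp only [p, stage_congr sup _ hxy], fun x α => hsplit α (p x α),
    fun x _ _ hβα => step_stage_le_stage hsup (fun α b p => (hsplit α p).le b) x hβα⟩

namespace IsFusion

variable {ψ : (K → Y) → K → K} {U : K → Set (K → Y)} {p : (K → Bool) → K → Condition K Y}
  {q : (K → Bool) → K → Bool → Condition K Y} {δ : (K → Bool) → K → K}

theorem monotone (h : IsFusion ψ U p q δ) (x : K → Bool) : Monotone fun α => q x α (x α) := by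
  intro β α hβα
  rcases hβα.lt_or_eq with hlt | rfl
  · exact (h.le x hlt).trans ((h.isSplitting x α).le _)
  · exact le_rfl

-- If `δ` did not increase from `β` to `α`, both halves at `α` would be decided alike at `β`.
theorem strictMono (h : IsFusion ψ U p q δ) (x : K → Bool) : StrictMono (δ x) := by
  intro β α hβα
  by_contra! hle
  have hdecided : ∀ b, ψ (q x α b).val (δ x α) = ψ (q x β (x β)).val (δ x α) := by
    intro b
    have hext : q x β (x β) ≤ q x α b := (h.le x hβα).trans ((h.isSplitting x α).le b)
    exact (h.isSplitting x β).eqOn_Iic (x β) _ hext.2 hle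
  exact (h.isSplitting x α).ne false true Bool.false_ne_true
    ((hdecided false).trans (hdecided true).symm)

theorem isSplitScheme (h : IsFusion ψ U p q δ) {w : (K → Bool) → K → Y}
    (hw : ∀ x α, w x ∈ (q x α (x α)).cyl) : IsSplitScheme (fun x => ψ (w x)) δ := by
  have hwy : ∀ x y α, EqOn x y (Iio α) →
      EqOn (ψ (w y)) (ψ (q x α (y α)).val) (Iic (δ x α)) := by
    intro x y α hxy
    refine (h.isSplitting x α).eqOn_Iic (y α) _ ?_
    rw [h.congr_q x y α hxy]
    exact hw y α
  refine ⟨h.strictMono, fun x y α hxy _ => ?_, fun x y α hxy hne => ?_⟩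
  · exact ((hwy x x α (eqOn_refl _ _)).mono Iio_subset_Iic_self).trans
      (((h.isSplitting x α).eqOn_Iio _ _).trans ((hwy x y α hxy).mono Iio_subset_Iic_self).symm)
  · simp only [hwy x x α (eqOn_refl _ _) self_mem_Iic, hwy x y α hxy self_mem_Iic]
    exact (h.isSplitting x α).ne _ _ hne

end IsFusion

theorem exists_perfectTree_body_subset_image [WellFoundedLT K] [Nonempty K] [NoMaxOrder K]
    [Nonempty Y] (hbdd : ∀ (α : K) (f : Iio α → K), BddAbove (range f)) {ψ : (K → Y) → K → K}
    (hψ : Continuous ψ) {U : K → Set (K → Y)} (hU : ∀ α, IsOpen (U α))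
    (hdense : ∀ α, ∀ p : Condition K Y, (U α ∩ p.cyl).Nonempty)
    (hnonconst : ∀ p : Condition K Y, (ψ '' p.cyl).Nontrivial) :
    ∃ S, PerfectTree K S ∧ Pruned K S ∧ body K S ⊆ ψ '' ⋂ α, U α := by
  obtain ⟨p, q, δ, h⟩ := exists_isFusion hbdd hψ hU hdense hnonconst
  choose w hw using fun x => Condition.iInter_cyl_nonempty (h.monotone x)
  have hw : ∀ x α, w x ∈ (q x α (x α)).cyl := fun x => mem_iInter.1 (hw x)
  have hscheme := h.isSplitScheme hw
  refine ⟨_, hscheme.perfectTree_initialSegments_range, pruned_initialSegments _, ?_⟩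
  rw [body_initialSegments hscheme.chainClosed_range]
  exact range_subset_iff.2 fun x => mem_image_of_mem ψ
    (mem_iInter.2 fun α => (h.isSplitting x α).cyl_subset _ (hw x α))

end Fusion

section Coding

variable {K : Type u} [LinearOrder K]

/-- `L` and `R` mark a left and a right immediate successor of every node of `T`, distinct at
splitting nodes. -/
structure IsMarking (T : Set (Nd K K)) (L R : Nd K K → K) : Prop where
  left_mem : ∀ p ∈ T, L p ∈ splitVals K T p
  right_mem : ∀ p ∈ T, R p ∈ splitVals K T p
  ne : ∀ p ∈ T, (splitVals K T p).Nontrivial → L p ≠ R p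

theorem exists_isMarking {T : Set (Nd K K)} (hT : PerfectTree K T) : ∃ L R, IsMarking T L R := by
  have hmark : ∀ p ∈ T, ∃ a b, a ∈ splitVals K T p ∧ b ∈ splitVals K T p ∧
      ((splitVals K T p).Nontrivial → a ≠ b) := by
    intro p hp
    by_cases hsplit : (splitVals K T p).Nontrivial
    · obtain ⟨a, ha, b, hb, hab⟩ := hsplit
      exact ⟨a, b, ha, hb, fun _ => hab⟩
    · obtain ⟨a, ha⟩ := splitVals_nonempty hT hp
      exact ⟨a, a, ha, ha, fun h => absurd h hsplit⟩
  obtain ⟨r, -⟩ := hT.1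
  have hne : Nonempty K := ⟨r.1⟩
  choose! L R hL hR hLR using hmark
  exact ⟨L, R, hL, hR, hLR⟩

/-- The levels at which `y` passes through the right mark of a node whose two marks differ. -/
def rightTurns (L R : Nd K K → K) (y : K → K) : Set K :=
  {j | L (xRes K y j) ≠ R (xRes K y j) ∧ y j = R (xRes K y j)}

theorem mem_rightTurns_congr {L R : Nd K K → K} {x y : K → K} {c j : K} (hxy : EqOn x y (Iio c))
    (hj : j < c) : j ∈ rightTurns L R x ↔ j ∈ rightTurns L R y := by
  have hres : xRes K x j = xRes K y j :=
    xRes_eq_xRes_iff.2 (hxy.mono (Iio_subset_Iio hj.le))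
  rw [rightTurns, rightTurns, mem_ofPred_eq, mem_ofPred_eq, hres, hxy hj]

theorem isLeast_rightTurns_congr {L R : Nd K K → K} {x y : K → K} {c i j : K}
    (hxy : EqOn x y (Iio c)) (hj : j < c) :
    IsLeast (rightTurns L R x ∩ Ici i) j ↔ IsLeast (rightTurns L R y ∩ Ici i) j := by
  suffices himp : ∀ {x y : K → K}, EqOn x y (Iio c) → IsLeast (rightTurns L R x ∩ Ici i) j →
      IsLeast (rightTurns L R y ∩ Ici i) j from ⟨himp hxy, himp hxy.symm⟩
  rintro x y hxy ⟨⟨hjx, hij⟩, hmin⟩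
  refine ⟨⟨(mem_rightTurns_congr hxy hj).1 hjx, hij⟩, fun k ⟨hk, hik⟩ => ?_⟩
  by_contra! hkj
  exact hkj.not_ge (hmin ⟨(mem_rightTurns_congr hxy (hkj.trans hj)).2 hk, hik⟩)

theorem exists_mem_cylinder_fixedPoints_eq [NoMaxOrder K] (z : K → K) {c : K} {s : Set K}
    (hs : ∀ i < c, i ∈ s ↔ i ∈ Function.fixedPoints z) :
    ∃ w ∈ cylinder z c, Function.fixedPoints w = s := by
  classical
  choose next hnext using fun i : K => exists_gt i
  refine ⟨fun i => if i < c then z i else if i ∈ s then i else next i,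
    fun i hi => if_pos hi, ?_⟩
  ext i
  rw [Function.mem_fixedPoints_iff]
  split_ifs with hic his
  · exact (hs i hic).symm
  · simp only [his]
  · simp only [his, (hnext i).ne']

open Classical in
/-- The branch that follows the right mark exactly at the levels in `s`. -/
noncomputable def branch [WellFoundedLT K] (L R : Nd K K → K) (s : Set K) (j : K) : K :=
  if j ∈ s then R ⟨j, fun i : Iio j => branch L R s i.1⟩
  else L ⟨j, fun i : Iio j => branch L R s i.1⟩
termination_by wellFounded_lt.wrap j
decreasing_by all_goals exact i.2

variable [WellFoundedLT K]

section Branch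

variable {L R : Nd K K → K} {s t : Set K} {j : K}

theorem branch_of_mem (hj : j ∈ s) : branch L R s j = R (xRes K (branch L R s) j) := by
  rw [branch, if_pos hj]
  rfl

theorem branch_of_notMem (hj : j ∉ s) : branch L R s j = L (xRes K (branch L R s) j) := by
  rw [branch, if_neg hj]
  rfl

theorem branch_eqOn {c : K} (hst : ∀ i < c, i ∈ s ↔ i ∈ t) :
    EqOn (branch L R s) (branch L R t) (Iio c) := by
  intro i hi
  induction i using WellFoundedLT.induction with
  | ind i ih =>
    have hres : xRes K (branch L R s) i = xRes K (branch L R t) i :=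
      xRes_eq_xRes_iff.2 fun k hk => ih k hk (hk.trans hi)
    by_cases his : i ∈ s
    · rw [branch_of_mem his, branch_of_mem ((hst i hi).1 his), hres]
    · rw [branch_of_notMem his, branch_of_notMem (mt (hst i hi).2 his), hres]

theorem branch_rightTurns (s : Set K) :
    branch L R (rightTurns L R (branch L R s)) = branch L R s := by
  funext j
  induction j using WellFoundedLT.induction with
  | ind j ih =>
    have hres := xRes_eq_xRes_iff.2 ih
    by_cases hj : j ∈ rightTurns L R (branch L R s)
    · rw [branch_of_mem hj, hres, hj.2]
    · rw [branch_of_notMem hj, hres]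
      by_cases hjs : j ∈ s
      · have hright := branch_of_mem (L := L) (R := R) hjs
        rw [hright]
        exact not_not.1 fun hne => hj ⟨hne, hright⟩
      · rw [branch_of_notMem hjs]

theorem mem_of_mem_rightTurns_branch (hj : j ∈ rightTurns L R (branch L R s)) : j ∈ s := by
  by_contra hjs
  exact hj.1 ((branch_of_notMem hjs).symm.trans hj.2)

theorem branch_mem_body {T : Set (Nd K K)} (hT : PerfectTree K T) (hLR : IsMarking T L R)
    (s : Set K) : branch L R s ∈ body K T := by
  refine mem_body_of_forall_mem_splitVals hT.1 hT.2.1 hT.2.2.1 fun c hc => ?_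
  by_cases hcs : c ∈ s
  · rw [branch_of_mem hcs]
    exact hLR.right_mem _ hc
  · rw [branch_of_notMem hcs]
    exact hLR.left_mem _ hc

theorem exists_mem_rightTurns_branch_insert [NoMaxOrder K] {T : Set (Nd K K)}
    (hT : PerfectTree K T) (hLR : IsMarking T L R) {c d : K} (hs : s ⊆ Iio c) (hcd : c ≤ d) :
    ∃ j ≥ d, j ∈ rightTurns L R (branch L R (insert j s)) ∧
      branch L R s j ≠ branch L R (insert j s) j := by
  have hbody := branch_mem_body hT hLR s
  obtain ⟨j, hj, hsplit⟩ := exists_nontrivial_splitVals_xRes hT hbody d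
  have hjs : j ∉ s := fun h => (hcd.trans hj).not_gt (hs h)
  have heq : xRes K (branch L R s) j = xRes K (branch L R (insert j s)) j :=
    xRes_eq_xRes_iff.2 (branch_eqOn fun i hi => by simp only [mem_insert_iff, hi.ne, false_or])
  have hne := hLR.ne _ (hbody j) hsplit
  have hright := branch_of_mem (L := L) (R := R) (mem_insert j s)
  refine ⟨j, hj, ⟨heq ▸ hne, hright⟩, ?_⟩
  rwa [branch_of_notMem hjs, hright, ← heq]

end Branch

/-- The branch coded by `z : K → K`, which turns right at the fixed points of `z`. -/
noncomputable def decode (L R : Nd K K → K) (z : K → K) : K → K :=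
  branch L R (Function.fixedPoints z)

/-- The codes `z` that send each level to the next right turn of the branch they code. -/
def codes (L R : Nd K K → K) : Set (K → K) :=
  {z | ∀ i, IsLeast (rightTurns L R (decode L R z) ∩ Ici i) (z i)}

variable {L R : Nd K K → K}

theorem decode_mapsTo_cylinder (z : K → K) (c : K) :
    MapsTo (decode L R) (cylinder z c) (cylinder (decode L R z) c) :=
  fun w hw => branch_eqOn fun i hi => by
    rw [Function.mem_fixedPoints_iff, Function.mem_fixedPoints_iff, hw hi]

theorem injOn_decode_codes : InjOn (decode L R) (codes L R) := by
  intro z hz w hw hzw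
  funext i
  exact (hz i).unique (hzw ▸ hw i)

theorem exists_mem_codes_decode_eq {s : Set K}
    (hunb : ∀ i, (rightTurns L R (branch L R s) ∩ Ici i).Nonempty) :
    ∃ z ∈ codes L R, decode L R z = branch L R s := by
  have hleast : ∀ i, ∃ j, IsLeast (rightTurns L R (branch L R s) ∩ Ici i) j := by
    intro i
    obtain ⟨j, hj, hmin⟩ := wellFounded_lt.has_min _ (hunb i)
    exact ⟨j, hj, fun k hk => not_lt.1 (hmin k hk)⟩
  choose z hz using hleast
  have hfix : Function.fixedPoints z = rightTurns L R (branch L R s) := by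
    ext i
    refine ⟨fun hi => ?_, fun hi => ((hz i).2 ⟨hi, self_mem_Ici⟩).antisymm (hz i).1.2⟩
    exact Function.mem_fixedPoints_iff.1 hi ▸ (hz i).1.1
  have hdecode : decode L R z = branch L R s := by rw [decode, hfix, branch_rightTurns]
  refine ⟨z, fun i => ?_, hdecode⟩
  rw [hdecode]
  exact hz i

section CodingTopology

attribute [local instance] bTop

theorem continuous_decode [Nonempty K] : Continuous (decode L R) :=
  continuous_iff_mapsTo_cylinder.2 fun z b => ⟨b, decode_mapsTo_cylinder z b⟩

theorem isClosed_codes [Nonempty K] [NoMaxOrder K] : IsClosed (codes L R) := by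
  refine isOpen_compl_iff.1 (isOpen_iff_cylinder_subset.2 fun z hz => ?_)
  obtain ⟨i, hi⟩ := not_forall.1 hz
  obtain ⟨b, hb⟩ := exists_gt (max i (z i))
  refine ⟨b, fun w hw hwcode => hi ?_⟩
  have hwi : w i = z i := hw ((le_max_left _ _).trans_lt hb)
  rw [← isLeast_rightTurns_congr (decode_mapsTo_cylinder z b hw) ((le_max_right _ _).trans_lt hb),
    ← hwi]
  exact hwcode i

end CodingTopology

end Coding

section Gaps

variable {K : Type u} [LinearOrder K] {L R : Nd K K → K}

/-- The functions `y` whose next right turn after some `i ≥ α` is beyond `x i`. -/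
def gapsAfter (L R : Nd K K → K) (x : K → K) (α : K) : Set (K → K) :=
  {y | ∃ i ≥ α, ∃ j, x i < j ∧ IsLeast (rightTurns L R y ∩ Ici i) j}

theorem isOpen_gapsAfter [NoMaxOrder K] (x : K → K) (α : K) :
    IsOpen[bTop K K] (gapsAfter L R x α) := by
  have hne : Nonempty K := ⟨α⟩
  refine isOpen_iff_cylinder_subset.2 ?_
  rintro y ⟨i, hi, j, hxj, hj⟩
  obtain ⟨c, hc⟩ := exists_gt j
  exact ⟨c, fun w hw => ⟨i, hi, j, hxj, (isLeast_rightTurns_congr hw hc).2 hj⟩⟩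

variable [WellFoundedLT K] [NoMaxOrder K] {T : Set (Nd K K)}

theorem nontrivial_decode_image_cyl (hT : PerfectTree K T) (hLR : IsMarking T L R)
    (p : Condition K K) : (decode L R '' p.cyl).Nontrivial := by
  let s := Function.fixedPoints p.val ∩ Iio p.len
  have hs : ∀ i < p.len, i ∈ s ↔ i ∈ Function.fixedPoints p.val :=
    fun i hi => and_iff_left hi
  obtain ⟨j, hj, -, hne⟩ :=
    exists_mem_rightTurns_branch_insert hT hLR (inter_subset_right : s ⊆ Iio p.len) le_rfl
  have hsj : ∀ i < p.len, i ∈ insert j s ↔ i ∈ Function.fixedPoints p.val := fun i hi => by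
    rw [mem_insert_iff, or_iff_right (hi.trans_le hj).ne, hs i hi]
  obtain ⟨v, hv, hvs⟩ := exists_mem_cylinder_fixedPoints_eq p.val hs
  obtain ⟨w, hw, hws⟩ := exists_mem_cylinder_fixedPoints_eq p.val hsj
  refine ⟨_, mem_image_of_mem _ hv, _, mem_image_of_mem _ hw, fun hvw => hne ?_⟩
  rw [decode, decode, hvs, hws] at hvw
  rw [hvw]

theorem decode_preimage_gapsAfter_inter_cyl_nonempty (hT : PerfectTree K T)
    (hLR : IsMarking T L R) (x : K → K) (α : K) (p : Condition K K) :
    (decode L R ⁻¹' gapsAfter L R x α ∩ p.cyl).Nonempty := by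
  let s := Function.fixedPoints p.val ∩ Iio p.len
  let i := max p.len α
  obtain ⟨d, hd⟩ := exists_gt (max i (x i))
  have hid : i < d := (le_max_left _ _).trans_lt hd
  have hxd : x i < d := (le_max_right _ _).trans_lt hd
  have hpi : p.len ≤ i := le_max_left _ _
  obtain ⟨j, hj, hturn, -⟩ := exists_mem_rightTurns_branch_insert hT hLR
    (inter_subset_right : s ⊆ Iio p.len) (hpi.trans hid.le)
  have hij : i < j := hid.trans_le hj
  obtain ⟨w, hw, hws⟩ := exists_mem_cylinder_fixedPoints_eq p.val (s := insert j s) fun k hk => by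
    rw [mem_insert_iff, or_iff_right (hk.trans (hpi.trans_lt hij)).ne]
    exact and_iff_left hk
  refine ⟨w, ⟨i, le_max_right _ _, j, hxd.trans_le hj, ?_⟩, hw⟩
  rw [decode, hws]
  refine ⟨⟨hturn, hij.le⟩, fun k ⟨hk, hik⟩ => ?_⟩
  rcases mem_of_mem_rightTurns_branch hk with rfl | hks
  · exact le_rfl
  · exact absurd hks.2 (hpi.trans hik).not_gt

end Gaps

section Sacks

variable {K : Type u} [LinearOrder K]

theorem nontrivial_image_cyl_of_injective [NoMaxOrder K] {ψ : (K → K) → K → K}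
    (hψ : Function.Injective ψ) (p : Condition K K) : (ψ '' p.cyl).Nontrivial := by
  classical
  obtain ⟨a, ha⟩ := exists_gt (p.val p.len)
  refine Nontrivial.image ⟨p.val, p.val_mem_cyl, Function.update p.val p.len a, fun i hi => ?_, ?_⟩
    hψ
  · exact Function.update_of_ne (ne_of_lt hi) _ _
  · exact fun h => ha.ne (by simpa using congrFun h p.len)

variable [WellFoundedLT K] {T : Set (Nd K K)} {L R : Nd K K → K}

theorem subset_of_body_subset_image_decode (hT : PerfectTree K T) (hLR : IsMarking T L R)
    {S : Set (Nd K K)} (hS : Pruned K S) (hbody : body K S ⊆ range (decode L R)) : S ⊆ T := by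
  refine subset_of_pruned hS (hbody.trans (range_subset_iff.2 fun z => ?_))
  exact branch_mem_body hT hLR _

variable [Nonempty K] [NoMaxOrder K] {A : Set (K → K)}

theorem exists_perfectTree_disjoint_of_evBddSet
    (hbdd : ∀ (α : K) (f : Iio α → K), BddAbove (range f)) (hT : PerfectTree K T)
    (hLR : IsMarking T L R) (hA : EvBddSet K (codes L R ∩ decode L R ⁻¹' A)) :
    ∃ S, PerfectTree K S ∧ S ⊆ T ∧ body K S ∩ A = ∅ := by
  let := bTop K K
  obtain ⟨x, hx⟩ := hA
  obtain ⟨S, hS, hpruned, hbody⟩ := exists_perfectTree_body_subset_image hbdd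
    (ψ := decode L R) continuous_decode
    (fun α => (isOpen_gapsAfter x α).preimage continuous_decode)
    (decode_preimage_gapsAfter_inter_cyl_nonempty hT hLR x) (nontrivial_decode_image_cyl hT hLR)
  refine ⟨S, hS, subset_of_body_subset_image_decode hT hLR hpruned
    (hbody.trans (image_subset_range _ _)), eq_empty_of_forall_notMem ?_⟩
  rintro y ⟨hyS, hyA⟩
  obtain ⟨w, hw, rfl⟩ := hbody hyS
  have hgap : ∀ α, decode L R w ∈ gapsAfter L R x α := by
    rwa [mem_iInter] at hw
  obtain ⟨z, hz, hzw⟩ : ∃ z ∈ codes L R, decode L R z = decode L R w := by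
    refine exists_mem_codes_decode_eq fun i => ?_
    obtain ⟨k, hik, j, -, ⟨hj, hkj⟩, -⟩ := hgap i
    exact ⟨j, hj, hik.trans hkj⟩
  obtain ⟨b, hb⟩ := hx z ⟨hz, by rwa [mem_preimage, hzw]⟩
  obtain ⟨i, hi, j, hxj, hj⟩ := hgap b
  have hzi : z i = j := (hz i).unique (hzw ▸ hj)
  exact (hb i hi).not_gt (hzi ▸ hxj)

theorem exists_perfectTree_subset_of_homeoToBaire
    (hbdd : ∀ (α : K) (f : Iio α → K), BddAbove (range f)) (hT : PerfectTree K T)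
    (hLR : IsMarking T L R) {C : Set (K → K)} (hC : C ⊆ codes L R ∩ decode L R ⁻¹' A)
    (hCK : HomeoToBaire K C) : ∃ S, PerfectTree K S ∧ S ⊆ T ∧ body K S ⊆ A := by
  let := bTop K K
  obtain ⟨e⟩ := hCK
  let ψ : (K → K) → K → K := fun z => decode L R (e.symm z)
  have hcont : Continuous ψ :=
    continuous_decode.comp (continuous_subtype_val.comp e.symm.continuous)
  have hinj : Function.Injective ψ := fun z w hzw => e.symm.injective
    (Subtype.ext (injOn_decode_codes (hC (e.symm z).2).1 (hC (e.symm w).2).1 hzw))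
  obtain ⟨S, hS, hpruned, hbody⟩ := exists_perfectTree_body_subset_image hbdd hcont
    (U := fun _ => univ) (fun _ => isOpen_univ)
    (fun _ p => ⟨p.val, mem_univ _, p.val_mem_cyl⟩) (nontrivial_image_cyl_of_injective hinj)
  have hrange : body K S ⊆ range ψ := hbody.trans (image_subset_range _ _)
  refine ⟨S, hS, subset_of_body_subset_image_decode hT hLR hpruned
    (hrange.trans (range_subset_iff.2 fun z => mem_range_self _)), hrange.trans ?_⟩
  exact range_subset_iff.2 fun z => (hC (e.symm z).2).2

end Sacks

end GeneralizedBaire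

open GeneralizedBaire in
theorem sacks_measurable_of_hurewicz_general (K : Type u) [LinearOrder K] [WellFoundedLT K]
    (hseg : ∀ b : K, #(Set.Iio b) < #K) (hreg : (#K).IsRegular) (Γ : Set (Set (K → K)))
    (hΓ : ∀ A ∈ Γ, ∀ f, Continuous[bTop K K, bTop K K] f → ∀ Z, IsClosed[bTop K K] Z →
      Z ∩ f ⁻¹' A ∈ Γ)
    (hHD : ∀ A ∈ Γ, HD K A) (A : Set (K → K)) (hA : A ∈ Γ) :
    ∀ T, PerfectTree K T → ∃ S, PerfectTree K S ∧ S ⊆ T ∧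
      (body K S ⊆ A ∨ body K S ∩ A = ∅) := by
  intro T hT
  have hne : Nonempty K := mk_ne_zero_iff.1 hreg.ne_zero
  have hnomax : NoMaxOrder K := noMaxOrder_of_mk_Iio_lt hreg.aleph0_le hseg
  have hsmall : ∀ s : Set K, #s < #K → BddAbove s := fun _ => bddAbove_of_mk_lt hseg hreg
  have hbdd : ∀ (α : K) (f : Iio α → K), BddAbove (range f) :=
    fun α _ => hsmall _ (mk_range_le.trans_lt (hseg α))
  obtain ⟨L, R, hLR⟩ := exists_isMarking hT
  rcases hHD _ (hΓ A hA (decode L R) continuous_decode (codes L R) isClosed_codes) with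
    ⟨B, hB, hAB⟩ | ⟨C, hCA, -, hC⟩
  · obtain ⟨x, hx⟩ := evBddSet_of_isKK hsmall hseg hB
    obtain ⟨S, hS, hST, hSA⟩ :=
      exists_perfectTree_disjoint_of_evBddSet hbdd hT hLR ⟨x, fun z hz => hx z (hAB hz)⟩
    exact ⟨S, hS, hST, Or.inr hSA⟩
  · obtain ⟨S, hS, hST, hSA⟩ := exists_perfectTree_subset_of_homeoToBaire hbdd hT hLR hCA hC
    exact ⟨S, hS, hST, Or.inl hSA⟩

/-- If `K` is not weakly compact and all Σ¹₁ subsets of `K → K` satisfy the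
Hurewicz dichotomy, then every Σ¹₁ subset is κ-Sacks measurable. -/
theorem sacks_measurable_of_hurewicz (K : Type u) [LinearOrder K] [WellFoundedLT K]
    (hseg : ∀ b : K, #(Set.Iio b) < #K)
    (hunc : ℵ₀ < #K) (hpow : Cardinal.powerlt #K #K = #K)
    (hnwc : ¬ WComp K)
    (hHD : ∀ A : Set (K → K), Sigma11 K A → HD K A)
    (A : Set (K → K)) (hA : Sigma11 K A) :
    ∀ T, PerfectTree K T → ∃ S, PerfectTree K S ∧ S ⊆ T ∧
      (body K S ⊆ A ∨ body K S ∩ A = ∅) :=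
  sacks_measurable_of_hurewicz_general K hseg
    (GeneralizedBaire.isRegular_of_powerlt_self hunc.le hpow) {A | Sigma11 K A}
    (fun _ hA _ hf _ hZ => GeneralizedBaire.sigma11_inter_preimage hA hf hZ) hHD A hA
end
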